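/- Let φ be an inner function, i.e., a holomorphic self-map of the unit disc 𝔻 whose radial boundary values have modulus 1 almost everywhere on the unit circle. Then ℳ(φ) = ℳ(𝒟) if and only if φ is a finite Blaschke product. -/

import Mathlib

open Complex MeasureTheory Metric Set Filter

noncomputable section

/-- The open unit disc in the complex plane. -/
def unitDisc : Set ℂ := Metric.ball 0 1

/-- The square of the Dirichlet norm:
`‖f‖²_𝒟 = |f(0)|² + ∫_𝔻 |f′(z)|² dA(z)`, with `A` normalized area measure. -/
def dirNormSq (f : ℂ → ℂ) : ℝ :=
  ‖f 0‖ ^ 2 + (1 / Real.pi) * ∫ z in unitDisc, ‖deriv f z‖ ^ 2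

/-- Membership in the Dirichlet space `𝒟`: `f` is holomorphic on `𝔻` and
`|f′|²` is integrable over `𝔻`. -/
def MemDirichlet (f : ℂ → ℂ) : Prop :=
  DifferentiableOn ℂ f unitDisc ∧
    IntegrableOn (fun z : ℂ => ‖deriv f z‖ ^ 2) unitDisc

/-- The `k`-th Taylor coefficient of `f` at `0`. -/
def taylorCoeff (f : ℂ → ℂ) (k : ℕ) : ℂ := iteratedDeriv k f 0 / (Nat.factorial k : ℂ)

/-- The square of the Hardy space `H²` norm: `Σ |a_k|²`. -/
def hardyNormSq (f : ℂ → ℂ) : ℝ := ∑' k : ℕ, ‖taylorCoeff f k‖ ^ 2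

/-- Membership in the Hardy space `H²`. -/
def MemHardy (f : ℂ → ℂ) : Prop :=
  DifferentiableOn ℂ f unitDisc ∧ Summable fun k : ℕ => ‖taylorCoeff f k‖ ^ 2

/-- The `H²` inner product `⟨f, g⟩ = Σ a_k \overline{b_k}`. -/
def hardyInner (f g : ℂ → ℂ) : ℂ :=
  ∑' k : ℕ, taylorCoeff f k * (starRingEnd ℂ) (taylorCoeff g k)

/-- `B` is a finite Blaschke product:
`B(z) = e^{iθ} ∏_{j=1}^{n} (a_j − z)/(1 − \overline{a_j} z)` with all `a_j ∈ 𝔻`. -/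
def IsFiniteBlaschke (B : ℂ → ℂ) : Prop :=
  ∃ (θ : ℝ) (n : ℕ) (a : Fin n → ℂ), (∀ j, ‖a j‖ < 1) ∧
    ∀ z ∈ unitDisc,
      B z = Complex.exp (θ * Complex.I) *
        ∏ j, (a j - z) / (1 - (starRingEnd ℂ) (a j) * z)

/-- Membership in the model space `K_B = H² ⊖ BH²`: `g ∈ H²` and `g ⟂ B·h`
for every `h ∈ H²`. -/
def MemModelSpace (B g : ℂ → ℂ) : Prop :=
  MemHardy g ∧ ∀ h : ℂ → ℂ, MemHardy h →
    hardyInner g (fun z => B z * h z) = 0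

/-- The weighted composition operator `W_{u,φ} : f ↦ u·(f∘φ)` is bounded
on the Dirichlet space: there is a constant `C` with
`‖u·(f∘φ)‖²_𝒟 ≤ C ‖f‖²_𝒟` (and `u·(f∘φ) ∈ 𝒟`) for all `f ∈ 𝒟`. -/
def WCOBounded (u φ : ℂ → ℂ) : Prop :=
  ∃ C : ℝ, 0 ≤ C ∧ ∀ f : ℂ → ℂ, MemDirichlet f →
    MemDirichlet (fun z => u z * f (φ z)) ∧
      dirNormSq (fun z => u z * f (φ z)) ≤ C * dirNormSq f

/-- `φ` is an inner function: a holomorphic self-map of `𝔻` whose radial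
boundary values have modulus `1` for almost every angle. -/
def IsInner (φ : ℂ → ℂ) : Prop :=
  DifferentiableOn ℂ φ unitDisc ∧ Set.MapsTo φ unitDisc unitDisc ∧
    ∀ᵐ θ : ℝ ∂(volume.restrict (Set.Ioc (0 : ℝ) (2 * Real.pi))),
      Tendsto (fun r : ℝ => ‖φ ((r : ℂ) * Complex.exp (θ * Complex.I))‖)
        (nhdsWithin 1 (Set.Iio 1)) (nhds 1)

/-- The multiplier space `ℳ(φ) = {u ∈ 𝒟 : W_{u,φ} is bounded on 𝒟}`. -/
def multSpace (φ : ℂ → ℂ) : Set (ℂ → ℂ) :=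
  {u | MemDirichlet u ∧ WCOBounded u φ}

/-- The multipliers of the Dirichlet space: holomorphic `u` on `𝔻` with
`u·f ∈ 𝒟` for every `f ∈ 𝒟`. -/
def dirichletMultipliers : Set (ℂ → ℂ) :=
  {u | DifferentiableOn ℂ u unitDisc ∧
    ∀ f : ℂ → ℂ, MemDirichlet f → MemDirichlet fun z => u z * f z}

lemma HasSum.congr_fun' {ι : Type*} {f g : ι → ℂ} {a : ℂ} (h : HasSum g a) (e : ∀ i, f i = g i) :
    HasSum f a := by
  rwa [show f = g from funext e]

lemma mem_unitDisc {z : ℂ} : z ∈ unitDisc ↔ ‖z‖ < 1 := by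
  simp [unitDisc]

lemma isOpen_unitDisc : IsOpen unitDisc := Metric.isOpen_ball

lemma hasSum_taylor {f : ℂ → ℂ} (hf : DifferentiableOn ℂ f unitDisc) {z : ℂ} (hz : ‖z‖ < 1) :
    HasSum (fun n => taylorCoeff f n * z ^ n) (f z) := by
  have := Complex.hasSum_taylorSeries_on_ball (c := 0) (r := 1) hf (z := z) (by simpa using hz)
  refine this.congr_fun' fun n => ?_
  simp [taylorCoeff]
  ring

lemma diff_of_hasSum {f : ℂ → ℂ} {a : ℕ → ℂ}
    (h : ∀ z : ℂ, ‖z‖ < 1 → HasSum (fun n => a n * z ^ n) (f z)) :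
    DifferentiableOn ℂ f unitDisc ∧ ∀ n, taylorCoeff f n = a n := by
  have hp : HasFPowerSeriesOnBall f (FormalMultilinearSeries.ofScalars ℂ a) 0 1 := by
    refine ⟨?_, by norm_num, ?_⟩
    · refine ENNReal.le_of_forall_nnreal_lt fun r hr => ?_
      refine FormalMultilinearSeries.le_radius_of_summable_norm _ ?_
      have hr' : (r : ℝ) < 1 := by exact_mod_cast hr
      have := (h (r : ℂ) (by simpa using hr')).summable.norm
      simpa [FormalMultilinearSeries.ofScalars_norm] using this
    · intro y hy
      have hy' : ‖y‖ < 1 := by simpa [← ENNReal.coe_one, Metric.eball_coe] using hy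
      rw [zero_add]
      refine (h y hy').congr_fun' fun n => ?_
      simp [mul_comm]
  constructor
  · have := hp.differentiableOn
    rwa [← ENNReal.coe_one, Metric.eball_coe] at this
  · intro n
    have h1 := hp.hasFPowerSeriesAt
    have hd := h1.analyticAt.hasFPowerSeriesAt
    have := h1.eq_formalMultilinearSeries hd
    have := congrArg (fun p => p.coeff n) this
    simp [FormalMultilinearSeries.coeff_ofScalars] at this
    rw [this, taylorCoeff]

lemma hasSum_of_bdd {a : ℕ → ℂ} {C : ℝ} (h : ∀ n, ‖a n‖ ≤ C) {z : ℂ} (hz : ‖z‖ < 1) :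
    Summable (fun n => ‖a n * z ^ n‖) := by
  refine Summable.of_nonneg_of_le (fun _ => norm_nonneg _) (fun n => ?_)
    ((summable_geometric_of_lt_one (norm_nonneg z) hz).mul_left C)
  rw [norm_mul, norm_pow]
  gcongr
  exact h n

lemma norm_summable_taylor {f : ℂ → ℂ} (hf : DifferentiableOn ℂ f unitDisc) {r : ℝ} (h0 : 0 ≤ r) (hr : r < 1) :
    Summable (fun n => ‖taylorCoeff f n‖ * r ^ n) := by
  have := (hasSum_taylor hf (z := (r : ℂ)) (by simpa [abs_of_nonneg h0] using hr)).summable.norm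
  simpa [abs_of_nonneg h0] using this

lemma taylorCoeff_deriv (f : ℂ → ℂ) (n : ℕ) :
    taylorCoeff (deriv f) n = (n + 1) * taylorCoeff f (n + 1) := by
  unfold taylorCoeff
  rw [iteratedDeriv_succ', Nat.factorial_succ]
  have : ((n : ℂ) + 1) ≠ 0 := by exact_mod_cast Nat.succ_ne_zero n
  have : ((n.factorial : ℂ)) ≠ 0 := by exact_mod_cast Nat.factorial_ne_zero n
  push_cast
  field_simp

lemma integral_exp_period (c : ℝ) (m : ℤ) :
    ∫ θ in c..(c + 2 * Real.pi), Complex.exp ((m : ℂ) * (θ * I)) = if m = 0 then 2 * (Real.pi : ℂ) else 0 := by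
  split_ifs with h
  · subst h; simp
  · have h2 : (m : ℂ) * I ≠ 0 := mul_ne_zero (by exact_mod_cast h) I_ne_zero
    have := integral_exp_mul_complex (a := c) (b := c + 2 * Real.pi) h2
    have e : ∀ θ : ℝ, (m : ℂ) * (θ * I) = m * I * θ := fun θ => by ring
    simp_rw [e, this]
    have : (m : ℂ) * I * ((c + 2 * Real.pi : ℝ) : ℂ) = m * I * c + m * (2 * Real.pi * I) := by
      push_cast; ring
    rw [this, Complex.exp_add, Complex.exp_int_mul_two_pi_mul_I]
    simp

lemma circle_sum {α : ℕ → ℂ} (hα : Summable fun n => ‖α n‖) (c : ℝ) (k : ℕ) :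
    HasSum (fun n => 2 * (Real.pi : ℂ) * (α (n + k) * (starRingEnd ℂ) (α n)))
      (∫ θ in c..(c + 2 * Real.pi), (∑' n, α n * Complex.exp (n * (θ * I))) *
        (starRingEnd ℂ) (∑' n, α n * Complex.exp (n * (θ * I))) * Complex.exp (-k * (θ * I))) := by
  have hn : ∀ (n : ℕ) (θ : ℝ), ‖α n * Complex.exp (n * (θ * I))‖ = ‖α n‖ := by
    intro n θ
    rw [norm_mul, show (n : ℂ) * (θ * I) = ((n * θ : ℝ) : ℂ) * I by push_cast; ring,
      Complex.norm_exp_ofReal_mul_I, mul_one]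
  let F : ℕ × ℕ → ℝ → ℂ := fun p θ => α p.1 * (starRingEnd ℂ) (α p.2) *
    Complex.exp (((p.1 - p.2 - k : ℤ) : ℂ) * (θ * I))
  have hF : ∀ p θ, ‖F p θ‖ = ‖α p.1‖ * ‖α p.2‖ := by
    intro p θ
    simp only [F]
    rw [norm_mul, norm_mul, RCLike.norm_conj,
      show (((p.1 - p.2 - k : ℤ) : ℂ)) * (θ * I) = (((p.1 - p.2 - k : ℤ) * θ : ℝ) : ℂ) * I by push_cast; ring,
      Complex.norm_exp_ofReal_mul_I, mul_one]
  have hs2 : Summable fun p : ℕ × ℕ => ‖α p.1‖ * ‖α p.2‖ := hα.mul_of_nonneg hα (fun _ => norm_nonneg _) (fun _ => norm_nonneg _)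
  have key : HasSum (fun p => ∫ θ in c..(c + 2 * Real.pi), F p θ) (∫ θ in c..(c + 2 * Real.pi), (∑' n, α n * Complex.exp (n * (θ * I))) *
        (starRingEnd ℂ) (∑' n, α n * Complex.exp (n * (θ * I))) * Complex.exp (-k * (θ * I))) := by
    refine intervalIntegral.hasSum_integral_of_dominated_convergence (fun p _ => ‖α p.1‖ * ‖α p.2‖)
      (fun p => ?_) (fun p => ?_) ?_ ?_ ?_
    · apply Continuous.aestronglyMeasurable; fun_prop
    · exact ae_of_all _ fun θ _ => (hF p θ).le
    · exact ae_of_all _ fun θ _ => hs2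
    · exact intervalIntegrable_const
    · refine ae_of_all _ fun θ _ => ?_
      have s1 : Summable fun n => ‖α n * Complex.exp (n * (θ * I))‖ := by simpa only [hn] using hα
      have s2 : Summable fun n => ‖(starRingEnd ℂ) (α n * Complex.exp (n * (θ * I)))‖ := by
        simpa only [RCLike.norm_conj] using s1
      have h1 := (summable_mul_of_summable_norm s1 s2).hasSum
      rw [← tsum_mul_tsum_of_summable_norm s1 s2] at h1
      have h2 := h1.mul_right (Complex.exp (-k * (θ * I)))
      rw [conj_tsum]
      refine HasSum.congr_fun' h2 fun p => ?_
      simp only [F, map_mul, ← Complex.exp_conj, conj_I, conj_ofReal, map_natCast]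
      rw [show (((p.1 - p.2 - k : ℤ) : ℂ)) * (θ * I) = (p.1 * (θ * I)) + (p.2 * (θ * -I)) + (-k * (θ * I)) by push_cast; ring,
        Complex.exp_add, Complex.exp_add]
      ring
  have hval : ∀ p, ∫ θ in c..(c + 2 * Real.pi), F p θ = if p.1 = p.2 + k then 2 * (Real.pi : ℂ) * (α p.1 * (starRingEnd ℂ) (α p.2)) else 0 := by
    intro p
    simp only [F]
    rw [intervalIntegral.integral_const_mul, integral_exp_period]
    have : ((p.1 : ℤ) - p.2 - k = 0) ↔ p.1 = p.2 + k := by omega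
    simp only [this]
    split_ifs <;> ring
  have hinj : Function.Injective (fun n : ℕ => ((n + k, n) : ℕ × ℕ)) := by
    intro a b h; simpa using congrArg Prod.snd h
  simp_rw [hval] at key
  rw [← hinj.hasSum_iff] at key
  · convert key using 1
    ext n; simp
  · intro p hp
    rw [if_neg]
    intro h; apply hp
    exact ⟨p.2, by simp [← h]⟩

lemma circle_coeff {f : ℂ → ℂ} (hf : DifferentiableOn ℂ f unitDisc) {r : ℝ} (h0 : 0 ≤ r) (hr : r < 1)
    (c : ℝ) (k : ℕ) :
    HasSum (fun n => 2 * (Real.pi : ℂ) * (taylorCoeff f (n + k) * (starRingEnd ℂ) (taylorCoeff f n)) * r ^ (2 * n + k))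
      (∫ θ in c..(c + 2 * Real.pi), ((‖f (r * Complex.exp (θ * I))‖ ^ 2 : ℝ) : ℂ) * Complex.exp (-k * (θ * I))) := by
  have := circle_sum (α := fun n => taylorCoeff f n * r ^ n) (by
    simpa [abs_of_nonneg h0] using norm_summable_taylor hf h0 hr) c k
  convert this using 1
  · ext n
    simp only [map_mul, map_pow, conj_ofReal]
    ring
  · congr 1
    ext θ
    have hz : ‖(r * Complex.exp (θ * I) : ℂ)‖ < 1 := by
      rw [norm_mul, Complex.norm_exp_ofReal_mul_I]; simpa [abs_of_nonneg h0] using hr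
    have e := (hasSum_taylor hf hz).tsum_eq
    have e2 : ∀ n : ℕ, taylorCoeff f n * r ^ n * Complex.exp (n * (θ * I)) = taylorCoeff f n * (r * Complex.exp (θ * I)) ^ n := by
      intro n
      rw [mul_pow, ← Complex.exp_nat_mul]; ring
    simp_rw [e2, e]
    rw [Complex.mul_conj, Complex.normSq_eq_norm_sq]

lemma circle_normSq {f : ℂ → ℂ} (hf : DifferentiableOn ℂ f unitDisc) {r : ℝ} (h0 : 0 ≤ r) (hr : r < 1)
    (c : ℝ) :
    HasSum (fun n => 2 * Real.pi * ‖taylorCoeff f n‖ ^ 2 * r ^ (2 * n))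
      (∫ θ in c..(c + 2 * Real.pi), ‖f (r * Complex.exp (θ * I))‖ ^ 2) := by
  have := circle_coeff hf h0 hr c 0
  simp only [CharP.cast_eq_zero, neg_zero, zero_mul, Complex.exp_zero, mul_one, add_zero] at this
  rw [intervalIntegral.integral_ofReal] at this
  rw [← Complex.hasSum_ofReal]
  convert this using 1
  ext n
  push_cast
  rw [Complex.mul_conj, Complex.normSq_eq_norm_sq]
  push_cast
  ring

lemma circle_lintegral {g : ℂ → ℂ} (hg : DifferentiableOn ℂ g unitDisc) {r : ℝ} (h0 : 0 ≤ r) (hr : r < 1) :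
    ∫⁻ θ in Ioo (-Real.pi) Real.pi, ENNReal.ofReal (‖g (r * Complex.exp (θ * I))‖ ^ 2) =
      ∑' n, ENNReal.ofReal (2 * Real.pi * ‖taylorCoeff g n‖ ^ 2 * r ^ (2 * n)) := by
  have h := circle_normSq hg h0 hr (-Real.pi)
  have hc : Continuous fun θ : ℝ => ‖g (r * Complex.exp (θ * I))‖ ^ 2 := by
    refine (Continuous.norm ?_).pow 2
    refine hg.continuousOn.comp_continuous (by fun_prop) fun θ => ?_
    rw [mem_unitDisc, norm_mul, Complex.norm_exp_ofReal_mul_I]; simpa [abs_of_nonneg h0] using hr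
  rw [← ENNReal.ofReal_tsum_of_nonneg (fun n => by positivity) h.summable, h.tsum_eq,
    ← ofReal_integral_eq_lintegral_ofReal, ← integral_Ioc_eq_integral_Ioo,
    intervalIntegral.integral_of_le (by linarith [Real.pi_pos])]
  · congr 3; congr 1; ring
  · exact (hc.integrableOn_Icc (a := -Real.pi) (b := Real.pi)).mono_set Ioo_subset_Icc_self
  · exact ae_of_all _ fun θ => by positivity

lemma area_normSq {g : ℂ → ℂ} (hg : DifferentiableOn ℂ g unitDisc) :
    ∫⁻ z in unitDisc, ENNReal.ofReal (‖g z‖ ^ 2) =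
      ∑' n : ℕ, ENNReal.ofReal (Real.pi * (‖taylorCoeff g n‖ ^ 2 / (n + 1))) := by
  classical
  have hdm : MeasurableSet unitDisc := isOpen_unitDisc.measurableSet
  set G : ℂ → ENNReal := unitDisc.indicator fun z => ENNReal.ofReal (‖g z‖ ^ 2) with hG
  have hGm : Measurable G := by
    rw [hG, ← Set.piecewise_eq_indicator]
    refine ContinuousOn.measurable_piecewise ?_ continuousOn_const hdm
    exact ENNReal.continuous_ofReal.comp_continuousOn (hg.continuousOn.norm.pow 2)
  rw [← lintegral_indicator hdm, ← Complex.lintegral_comp_polarCoord_symm]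
  rw [show polarCoord.target = Ioi (0:ℝ) ×ˢ Ioo (-Real.pi) Real.pi from rfl, Measure.volume_eq_prod,
    ← Measure.prod_restrict, lintegral_prod]
  swap
  · refine Measurable.aemeasurable ?_
    refine Measurable.mul (by fun_prop) (hGm.comp ?_)
    have : (fun p : ℝ × ℝ => Complex.polarCoord.symm p) = fun p => (p.1 : ℂ) * (Real.cos p.2 + Real.sin p.2 * I) := by
      ext p; simp [Complex.polarCoord_symm_apply]
    change Measurable (fun p : ℝ × ℝ => Complex.polarCoord.symm p)
    rw [this]
    fun_prop
  have inner : ∀ r ∈ Ioi (0:ℝ), ∫⁻ θ in Ioo (-Real.pi) Real.pi, ENNReal.ofReal r • G (Complex.polarCoord.symm (r, θ)) =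
     (Ioo (0:ℝ) 1).indicator (fun r => ∑' n : ℕ, ENNReal.ofReal (2 * Real.pi * ‖taylorCoeff g n‖ ^ 2 * r ^ (2 * n + 1))) r := by
    intro r hr
    have hr : 0 < r := hr
    have e : ∀ θ : ℝ, Complex.polarCoord.symm (r, θ) = r * Complex.exp (θ * I) := by
      intro θ; rw [Complex.polarCoord_symm_apply, Complex.exp_mul_I]; simp
    have en : ∀ θ : ℝ, ‖(r * Complex.exp (θ * I) : ℂ)‖ = r := by
      intro θ; rw [norm_mul, Complex.norm_exp_ofReal_mul_I]; simp [abs_of_pos hr]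
    simp_rw [e]
    by_cases h1 : r < 1
    · rw [indicator_of_mem (show r ∈ Ioo (0:ℝ) 1 from ⟨hr, h1⟩)]
      have : ∀ θ : ℝ, G (r * Complex.exp (θ * I)) = ENNReal.ofReal (‖g (r * Complex.exp (θ * I))‖ ^ 2) := by
        intro θ
        rw [hG, indicator_of_mem]
        rw [mem_unitDisc, en]; exact h1
      simp_rw [this, smul_eq_mul]
      rw [lintegral_const_mul' _ _ ENNReal.ofReal_ne_top, circle_lintegral hg hr.le h1, ← ENNReal.tsum_mul_left]
      congr 1; ext n
      rw [← ENNReal.ofReal_mul hr.le]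
      congr 1; ring
    · rw [indicator_of_notMem (by simp [hr, not_lt.1 h1])]
      have : ∀ θ : ℝ, G (r * Complex.exp (θ * I)) = 0 := by
        intro θ
        rw [hG, indicator_of_notMem]
        rw [mem_unitDisc, en]; exact h1
      simp [this]
  rw [setLIntegral_congr_fun measurableSet_Ioi inner, setLIntegral_indicator measurableSet_Ioo,
    show Ioo (0:ℝ) 1 ∩ Ioi 0 = Ioo 0 1 by ext; simp; tauto, lintegral_tsum (fun n => by fun_prop)]
  congr 1; ext n
  rw [← ofReal_integral_eq_lintegral_ofReal]
  · congr 1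
    rw [← integral_Ioc_eq_integral_Ioo, ← intervalIntegral.integral_of_le zero_le_one,
      intervalIntegral.integral_const_mul, integral_pow]
    have : ((n:ℝ) + 1) ≠ 0 := by positivity
    have : (2 * (n:ℝ) + 1 + 1) ≠ 0 := by positivity
    push_cast
    simp
    field_simp
    ring
  · refine IntegrableOn.mono_set (t := Icc 0 1) ?_ Ioo_subset_Icc_self
    exact Continuous.integrableOn_Icc (by fun_prop)
  · filter_upwards [ae_restrict_mem measurableSet_Ioo] with r hr
    have := hr.1.le
    positivity

lemma diff_deriv {f : ℂ → ℂ} (hf : DifferentiableOn ℂ f unitDisc) :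
    DifferentiableOn ℂ (deriv f) unitDisc := hf.deriv isOpen_unitDisc

/-- Dirichlet integral as an extended nonnegative real. -/
def dirInt (f : ℂ → ℂ) : ENNReal := ∫⁻ z in unitDisc, ENNReal.ofReal (‖deriv f z‖ ^ 2)

lemma aesm_deriv {f : ℂ → ℂ} (hf : DifferentiableOn ℂ f unitDisc) :
    AEStronglyMeasurable (deriv f) (volume.restrict unitDisc) :=
  (diff_deriv hf).continuousOn.aestronglyMeasurable isOpen_unitDisc.measurableSet

lemma aesm_derivSq {f : ℂ → ℂ} (hf : DifferentiableOn ℂ f unitDisc) :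
    AEStronglyMeasurable (fun z => ‖deriv f z‖ ^ 2) (volume.restrict unitDisc) :=
  (aesm_deriv hf).norm.pow 2

lemma dirInt_eq {f : ℂ → ℂ} (hf : DifferentiableOn ℂ f unitDisc) :
    dirInt f = ∑' n : ℕ, ENNReal.ofReal (Real.pi * (n * ‖taylorCoeff f n‖ ^ 2)) := by
  rw [dirInt, area_normSq (diff_deriv hf), tsum_eq_zero_add' (f := fun n : ℕ => ENNReal.ofReal (Real.pi * (n * ‖taylorCoeff f n‖ ^ 2))) ENNReal.summable]
  simp only [CharP.cast_eq_zero, zero_mul, mul_zero, ENNReal.ofReal_zero, zero_add]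
  congr 1; ext n
  congr 2
  rw [taylorCoeff_deriv, norm_mul, show ‖(n:ℂ) + 1‖ = n + 1 by
    rw [show (n:ℂ) + 1 = ((n + 1 : ℝ) : ℂ) by push_cast; rfl, Complex.norm_real, Real.norm_of_nonneg (by positivity)]]
  have : ((n:ℝ) + 1) ≠ 0 := by positivity
  push_cast
  field_simp

lemma memDirichlet_iff_dirInt {f : ℂ → ℂ} (hf : DifferentiableOn ℂ f unitDisc) :
    MemDirichlet f ↔ dirInt f ≠ ⊤ := by
  unfold MemDirichlet dirInt
  rw [and_iff_right hf, IntegrableOn, ← lt_top_iff_ne_top, Integrable, and_iff_right (aesm_derivSq hf),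
    hasFiniteIntegral_iff_ofReal (ae_of_all _ fun _ => by positivity)]

lemma memDirichlet_iff {f : ℂ → ℂ} (hf : DifferentiableOn ℂ f unitDisc) :
    MemDirichlet f ↔ Summable fun n : ℕ => n * ‖taylorCoeff f n‖ ^ 2 := by
  rw [memDirichlet_iff_dirInt hf, dirInt_eq hf]
  constructor
  · intro h
    have := ENNReal.summable_toReal h
    refine (summable_mul_left_iff Real.pi_ne_zero).1 (this.congr fun n => ?_)
    exact ENNReal.toReal_ofReal (by positivity)
  · intro h
    rw [← ENNReal.ofReal_tsum_of_nonneg (fun n => by positivity) (h.mul_left _)]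
    exact ENNReal.ofReal_ne_top

lemma dirNormSq_eq_dirInt {f : ℂ → ℂ} (hf : DifferentiableOn ℂ f unitDisc) :
    dirNormSq f = ‖f 0‖ ^ 2 + 1 / Real.pi * (dirInt f).toReal := by
  unfold dirNormSq dirInt
  rw [integral_eq_lintegral_of_nonneg_ae (ae_of_all _ fun _ => by positivity) (aesm_derivSq hf)]

lemma taylorCoeff_zero (f : ℂ → ℂ) : taylorCoeff f 0 = f 0 := by simp [taylorCoeff]

lemma dirNormSq_eq {f : ℂ → ℂ} (hf : MemDirichlet f) :
    dirNormSq f = ‖taylorCoeff f 0‖ ^ 2 + ∑' n : ℕ, n * ‖taylorCoeff f n‖ ^ 2 := by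
  rw [dirNormSq_eq_dirInt hf.1, dirInt_eq hf.1, taylorCoeff_zero,
    ← ENNReal.ofReal_tsum_of_nonneg (fun n => by positivity) (((memDirichlet_iff hf.1).1 hf).mul_left _),
    ENNReal.toReal_ofReal (tsum_nonneg fun n => by positivity), tsum_mul_left]
  have := Real.pi_ne_zero
  field_simp

lemma dirNormSq_nonneg (f : ℂ → ℂ) : 0 ≤ dirNormSq f := by
  unfold dirNormSq
  have := Real.pi_pos
  have : 0 ≤ ∫ z in unitDisc, ‖deriv f z‖ ^ 2 := integral_nonneg fun _ => by positivity
  positivity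

lemma det_complex_deriv (c : ℂ) :
    |((c • (1 : ℂ →L[ℝ] ℂ)) : ℂ →L[ℝ] ℂ).det| = ‖c‖ ^ 2 := by
  have : ((c • (1 : ℂ →L[ℝ] ℂ)) : ℂ →L[ℝ] ℂ).det = ‖c‖ ^ 2 := by
    rw [ContinuousLinearMap.det, ← Complex.normSq_eq_norm_sq, ← Algebra.norm_complex_apply, Algebra.norm_apply]
    congr 1
  rw [this, abs_of_nonneg (by positivity)]

/-- composition with a holomorphic self-map of the disc with at most `N` preimages. -/
lemma dirInt_comp_le {φ f : ℂ → ℂ} {N : ℕ} (hφ : DifferentiableOn ℂ φ unitDisc)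
    (hm : MapsTo φ unitDisc unitDisc)
    (hN : ∀ w : ℂ, ∀ s : Finset ℂ, (∀ z ∈ s, z ∈ unitDisc ∧ φ z = w) → s.card ≤ N)
    (hf : DifferentiableOn ℂ f unitDisc) :
    dirInt (fun z => f (φ z)) ≤ N * dirInt f := by
  classical
  have hdm : MeasurableSet unitDisc := isOpen_unitDisc.measurableSet
  have hda : ∀ z ∈ unitDisc, HasDerivAt φ (deriv φ z) z := fun z hz =>
    (hφ.differentiableAt (isOpen_unitDisc.mem_nhds hz)).hasDerivAt
  set F : ℂ → ENNReal := fun w => ENNReal.ofReal (‖deriv f w‖ ^ 2) with hF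
  have e1 : dirInt (fun z => f (φ z)) = ∫⁻ z in unitDisc, ENNReal.ofReal (‖deriv φ z‖ ^ 2) * F (φ z) := by
    refine setLIntegral_congr_fun hdm fun z hz => ?_
    have h2 := (hf.differentiableAt (isOpen_unitDisc.mem_nhds (hm hz))).hasDerivAt
    have h3 : deriv (fun z => f (φ z)) z = _ := (h2.comp z (hda z hz)).deriv
    simp only [h3, F]
    rw [norm_mul, mul_pow, mul_comm, ENNReal.ofReal_mul (by positivity)]
  set Z : Set ℂ := unitDisc ∩ {z | deriv φ z ≠ 0} with hZ
  have hZo : IsOpen Z := by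
    have := (diff_deriv hφ).continuousOn.isOpen_inter_preimage isOpen_unitDisc (t := {0}ᶜ) isOpen_compl_singleton
    exact this
  have e2 : ∫⁻ z in unitDisc, ENNReal.ofReal (‖deriv φ z‖ ^ 2) * F (φ z) = ∫⁻ z in Z, ENNReal.ofReal (‖deriv φ z‖ ^ 2) * F (φ z) := by
    rw [← lintegral_indicator hdm, ← lintegral_indicator hZo.measurableSet]
    congr 1; ext z
    by_cases hz : z ∈ unitDisc
    · by_cases h0 : deriv φ z = 0
      · simp [hZ, hz, h0]
      · simp [hZ, hz, h0]
    · simp [hZ, hz]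
  have hloc : ∀ z ∈ Z, ∃ U : Set ℂ, IsOpen U ∧ z ∈ U ∧ InjOn φ U := by
    intro z hz
    have han : AnalyticAt ℂ φ z := hφ.analyticAt (isOpen_unitDisc.mem_nhds hz.1)
    have hs : HasStrictDerivAt φ (deriv φ z) z := han.hasStrictDerivAt
    let e := (hs.hasStrictFDerivAt_equiv hz.2).toOpenPartialHomeomorph φ
    exact ⟨e.source, e.open_source, (hs.hasStrictFDerivAt_equiv hz.2).mem_toOpenPartialHomeomorph_source, e.injOn⟩
  choose! U hUo hUz hUi using hloc
  obtain ⟨t, htZ, htc, hcov⟩ := TopologicalSpace.countable_cover_nhdsWithin (f := U) (s := Z)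
    fun z hz => mem_nhdsWithin_of_mem_nhds ((hUo z hz).mem_nhds (hUz z hz))
  obtain ⟨V, hVm, hVd, hVu, hVi⟩ : ∃ V : ℕ → Set ℂ, (∀ i, MeasurableSet (V i)) ∧ Pairwise (Function.onFun Disjoint V) ∧
      Z = ⋃ i, V i ∧ ∀ i, InjOn φ (V i) := by
    rcases t.eq_empty_or_nonempty with h | h
    · refine ⟨fun _ => ∅, fun _ => MeasurableSet.empty, fun i j _ => by simp [Function.onFun], ?_, fun i => by simp⟩
      subst h
      simpa using hcov
    · obtain ⟨g, rfl⟩ := htc.exists_eq_range h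
      have hg : ∀ i, g i ∈ Z := fun i => htZ ⟨i, rfl⟩
      refine ⟨disjointed fun i => U (g i) ∩ Z, fun i => ?_, disjoint_disjointed _, ?_, fun i => ?_⟩
      · exact MeasurableSet.disjointed (fun i => ((hUo _ (hg i)).inter hZo).measurableSet) i
      · rw [iUnion_disjointed, ← iUnion_inter]
        symm
        rw [inter_eq_right]
        simpa using hcov
      · exact (hUi _ (hg i)).mono ((disjointed_subset _ i).trans inter_subset_left)
  have hVZ : ∀ i, V i ⊆ Z := fun i => by rw [hVu]; exact subset_iUnion V i
  have hder : ∀ i, ∀ x ∈ V i, HasFDerivWithinAt φ (deriv φ x • (1 : ℂ →L[ℝ] ℂ)) (V i) x := fun i x hx =>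
    ((hda x (hVZ i hx).1).complexToReal_fderiv).hasFDerivWithinAt
  have e3 : ∫⁻ z in Z, ENNReal.ofReal (‖deriv φ z‖ ^ 2) * F (φ z) = ∑' i, ∫⁻ w in φ '' (V i), F w := by
    conv_lhs => rw [hVu]
    rw [lintegral_iUnion hVm hVd]
    congr 1; ext i
    rw [lintegral_image_eq_lintegral_abs_det_fderiv_mul volume (hVm i) (hder i) (hVi i)]
    simp_rw [det_complex_deriv]
  have him : ∀ i, MeasurableSet (φ '' V i) := fun i =>
    measurable_image_of_fderivWithin (hVm i) (hder i) (hVi i)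
  have hFm : AEMeasurable F (volume.restrict unitDisc) := by
    exact (aesm_derivSq hf).aemeasurable.ennreal_ofReal
  have hsub : ∀ i, φ '' V i ⊆ unitDisc := fun i => by
    rintro _ ⟨z, hz, rfl⟩; exact hm (hVZ i hz).1
  have e4 : ∀ i, ∫⁻ w in φ '' (V i), F w = ∫⁻ w in unitDisc, (φ '' V i).indicator F w := by
    intro i
    rw [setLIntegral_indicator (him i), inter_eq_left.2 (hsub i)]
  have hcount : ∀ w, ∑' i, (φ '' V i).indicator F w ≤ N * F w := by
    intro w
    have : ∀ i, (φ '' V i).indicator F w = (if w ∈ φ '' V i then 1 else 0) * F w := by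
      intro i; rw [indicator_apply]; split_ifs <;> simp
    simp_rw [this]
    rw [ENNReal.tsum_mul_right]
    gcongr
    rw [ENNReal.tsum_eq_iSup_sum]
    refine iSup_le fun s => ?_
    rw [Finset.sum_boole]
    norm_cast
    set s' := s.filter fun i => w ∈ φ '' V i with hs'
    have hch : ∀ i ∈ s', ∃ z ∈ V i, φ z = w := fun i hi => by
      have := (Finset.mem_filter.1 hi).2
      exact this
    choose! p hp1 hp2 using hch
    have hinj : InjOn p s' := by
      intro i hi j hj hij
      by_contra hne
      have := (hVd hne).le_bot (show p i ∈ V i ⊓ V j from ⟨hp1 i hi, hij ▸ hp1 j hj⟩)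
      exact this
    rw [← Finset.card_image_of_injOn hinj]
    refine hN w _ fun z hz => ?_
    obtain ⟨i, hi, rfl⟩ := Finset.mem_image.1 hz
    exact ⟨(hVZ i (hp1 i hi)).1, hp2 i hi⟩
  rw [e1, e2, e3]
  simp_rw [e4]
  rw [← lintegral_tsum fun i => hFm.indicator (him i), dirInt, ← lintegral_const_mul' _ _ (ENNReal.natCast_ne_top N)]
  exact lintegral_mono hcount

lemma memDirichlet_comp {φ f : ℂ → ℂ} {N : ℕ} (hφ : DifferentiableOn ℂ φ unitDisc)
    (hm : MapsTo φ unitDisc unitDisc)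
    (hN : ∀ w : ℂ, ∀ s : Finset ℂ, (∀ z ∈ s, z ∈ unitDisc ∧ φ z = w) → s.card ≤ N)
    (hf : MemDirichlet f) : MemDirichlet (fun z => f (φ z)) := by
  refine (memDirichlet_iff_dirInt (f := fun z => f (φ z)) (hf.1.comp hφ hm)).2 ?_
  refine ne_top_of_le_ne_top ?_ (dirInt_comp_le hφ hm hN hf.1)
  exact ENNReal.mul_ne_top (ENNReal.natCast_ne_top N) ((memDirichlet_iff_dirInt hf.1).1 hf)

lemma cs_hasSum {x : ℕ → ℂ} {f g : ℕ → ℝ} {X : ℂ} {F G : ℝ} (hx : HasSum x X) (hf : HasSum f F) (hg : HasSum g G)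
    (f0 : ∀ n, 0 ≤ f n) (g0 : ∀ n, 0 ≤ g n) (h : ∀ n, ‖x n‖ ^ 2 = f n * g n) : ‖X‖ ^ 2 ≤ F * G := by
  have ht : Tendsto (fun s : Finset ℕ => ‖∑ n ∈ s, x n‖ ^ 2) atTop (nhds (‖X‖ ^ 2)) := hx.norm.pow 2
  refine le_of_tendsto ht (Eventually.of_forall fun s => ?_)
  calc ‖∑ n ∈ s, x n‖ ^ 2 ≤ (∑ n ∈ s, ‖x n‖) ^ 2 := by gcongr; exact norm_sum_le _ _
    _ ≤ (∑ n ∈ s, f n) * ∑ n ∈ s, g n :=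
      Finset.sum_sq_le_sum_mul_sum_of_sq_le_mul s (fun i _ => f0 i) (fun i _ => g0 i) (fun i _ => (h i).le)
    _ ≤ F * G := by
      have h1 := sum_le_hasSum s (fun i _ => f0 i) hf
      have h2 := sum_le_hasSum s (fun i _ => g0 i) hg
      have : 0 ≤ ∑ n ∈ s, g n := Finset.sum_nonneg fun i _ => g0 i
      have : 0 ≤ ∑ n ∈ s, f n := Finset.sum_nonneg fun i _ => f0 i
      gcongr
      linarith

/-- the weights of the Dirichlet norm -/
def wt (n : ℕ) : ℝ := max 1 n

lemma one_le_wt (n : ℕ) : 1 ≤ wt n := le_max_left _ _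
lemma wt_pos (n : ℕ) : 0 < wt n := lt_of_lt_of_le one_pos (one_le_wt n)
lemma wt_zero : wt 0 = 1 := by simp [wt]
lemma wt_succ (n : ℕ) : wt (n + 1) = n + 1 := by
  simp [wt]

lemma summable_wt_iff {a : ℕ → ℂ} : (Summable fun n => wt n * ‖a n‖ ^ 2) ↔ Summable fun n : ℕ => n * ‖a n‖ ^ 2 := by
  rw [← summable_nat_add_iff 1, ← summable_nat_add_iff (f := fun n : ℕ => n * ‖a n‖ ^ 2) 1]
  simp only [wt_succ]; push_cast; rfl

lemma memDirichlet_iff_wt {f : ℂ → ℂ} (hf : DifferentiableOn ℂ f unitDisc) :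
    MemDirichlet f ↔ Summable fun n : ℕ => wt n * ‖taylorCoeff f n‖ ^ 2 := by
  rw [memDirichlet_iff hf, summable_wt_iff]

lemma dirNormSq_hasSum {f : ℂ → ℂ} (hf : MemDirichlet f) :
    HasSum (fun n => wt n * ‖taylorCoeff f n‖ ^ 2) (dirNormSq f) := by
  have h := (memDirichlet_iff_wt hf.1).1 hf
  have h' := (memDirichlet_iff hf.1).1 hf
  convert h.hasSum using 1
  rw [dirNormSq_eq hf, h.tsum_eq_zero_add, h'.tsum_eq_zero_add]
  simp [wt_succ, wt_zero]

lemma memDirichlet_of_series {f : ℂ → ℂ} {a : ℕ → ℂ} (ha : Summable fun n => wt n * ‖a n‖ ^ 2)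
    (h : ∀ z : ℂ, ‖z‖ < 1 → f z = ∑' n, a n * z ^ n) :
    MemDirichlet f ∧ (∀ n, taylorCoeff f n = a n) ∧ (∀ z : ℂ, ‖z‖ < 1 → HasSum (fun n => a n * z ^ n) (f z)) := by
  have hs : ∀ z : ℂ, ‖z‖ < 1 → HasSum (fun n => a n * z ^ n) (f z) := by
    intro z hz
    rw [h z hz]
    refine (Summable.of_norm (hasSum_of_bdd (C := Real.sqrt (∑' n, wt n * ‖a n‖ ^ 2)) (fun n => ?_) hz)).hasSum
    refine Real.le_sqrt_of_sq_le ?_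
    have h1 := ha.le_tsum n (fun m _ => mul_nonneg (wt_pos m).le (sq_nonneg _))
    have := one_le_wt n
    nlinarith [sq_nonneg ‖a n‖]
  obtain ⟨h1, h2⟩ := diff_of_hasSum hs
  refine ⟨?_, h2, hs⟩
  rw [memDirichlet_iff_wt h1]
  simpa only [h2] using ha

/-- the reproducing kernel on the diagonal -/
def kap (z : ℂ) : ℝ := 1 - Real.log (1 - ‖z‖ ^ 2)

lemma hasSum_kap {z : ℂ} (hz : ‖z‖ < 1) : HasSum (fun n => (‖z‖ ^ 2) ^ n / wt n) (kap z) := by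
  have h1 : ‖z‖ ^ 2 < 1 := by nlinarith [norm_nonneg z]
  have := Real.hasSum_pow_div_log_of_abs_lt_one (x := ‖z‖ ^ 2) (by rwa [abs_of_nonneg (by positivity)])
  rw [← hasSum_nat_add_iff' 1]
  simp only [wt_succ, Finset.range_one, Finset.sum_singleton, pow_zero, wt_zero, kap]
  rw [show 1 - Real.log (1 - ‖z‖ ^ 2) - 1 / 1 = -Real.log (1 - ‖z‖ ^ 2) by ring]
  exact this

lemma one_le_kap {z : ℂ} (hz : ‖z‖ < 1) : 1 ≤ kap z := by
  have h1 : ‖z‖ ^ 2 < 1 := by nlinarith [norm_nonneg z]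
  have := Real.log_nonpos (x := 1 - ‖z‖ ^ 2) (by linarith) (by nlinarith [norm_nonneg z])
  unfold kap; linarith

lemma pointwise_series {a : ℕ → ℂ} {A : ℝ} (ha : HasSum (fun n => wt n * ‖a n‖ ^ 2) A) {z X : ℂ} (hz : ‖z‖ < 1)
    (hX : HasSum (fun n => a n * z ^ n) X) : ‖X‖ ^ 2 ≤ A * kap z := by
  refine cs_hasSum hX ha (hasSum_kap hz) (fun n => ?_) (fun n => ?_) (fun n => ?_)
  · exact mul_nonneg (wt_pos n).le (sq_nonneg _)
  · exact div_nonneg (by positivity) (wt_pos n).le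
  · have := (wt_pos n).ne'
    rw [norm_mul, norm_pow]
    field_simp
    ring

lemma pointwise_bound {f : ℂ → ℂ} (hf : MemDirichlet f) {z : ℂ} (hz : ‖z‖ < 1) :
    ‖f z‖ ^ 2 ≤ dirNormSq f * kap z :=
  pointwise_series (dirNormSq_hasSum hf) hz (hasSum_taylor hf.1 hz)

/-- reproducing kernel at `w` -/
lemma exists_kernel {w : ℂ} (hw : ‖w‖ < 1) : ∃ f, MemDirichlet f ∧ dirNormSq f = kap w ∧ f w = kap w := by
  let a : ℕ → ℂ := fun n => (starRingEnd ℂ w) ^ n / wt n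
  have ha : ∀ n, wt n * ‖a n‖ ^ 2 = (‖w‖ ^ 2) ^ n / wt n := by
    intro n
    have := (wt_pos n).ne'
    simp only [a]
    rw [norm_div, norm_pow, RCLike.norm_conj, Complex.norm_real, Real.norm_of_nonneg (wt_pos n).le]
    field_simp
    ring
  have hs : HasSum (fun n => wt n * ‖a n‖ ^ 2) (kap w) := by simpa only [ha] using hasSum_kap hw
  obtain ⟨h1, h2, h3⟩ := memDirichlet_of_series (f := fun z => ∑' n, a n * z ^ n) hs.summable (fun z _ => rfl)
  refine ⟨_, h1, ?_, ?_⟩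
  · have := dirNormSq_hasSum h1
    simp only [h2] at this
    exact this.unique hs
  · refine (h3 w hw).unique ?_
    rw [← Complex.hasSum_ofReal] at hs
    refine hs.congr_fun' fun n => ?_
    rw [ha]
    simp only [a]
    push_cast
    rw [← Complex.conj_mul']
    rw [mul_pow]; ring

abbrev L2 := lp (fun _ : ℕ => ℂ) 2

lemma L2_hasSum (y : L2) : HasSum (fun n => ‖y n‖ ^ 2) (‖y‖ ^ 2) := by
  have := lp.hasSum_norm (p := 2) (by norm_num) y
  simpa using this

lemma L2_mk {y : ℕ → ℂ} (h : Summable fun n => ‖y n‖ ^ 2) : ∃ Y : L2, ∀ n, Y n = y n := by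
  refine ⟨⟨y, ?_⟩, fun n => rfl⟩
  refine memℓp_gen ?_
  simpa using h

/-- Dirichlet function of an `ℓ²` sequence -/
def dfun (y : L2) (z : ℂ) : ℂ := ∑' n, y n / Real.sqrt (wt n) * z ^ n

lemma dfun_wt (y : L2) (n : ℕ) : wt n * ‖y n / Real.sqrt (wt n)‖ ^ 2 = ‖y n‖ ^ 2 := by
  have := (wt_pos n)
  rw [norm_div, Complex.norm_real, Real.norm_of_nonneg (Real.sqrt_nonneg _), div_pow, Real.sq_sqrt this.le]
  field_simp

lemma dfun_props (y : L2) : MemDirichlet (dfun y) ∧ (∀ n, taylorCoeff (dfun y) n = y n / Real.sqrt (wt n)) ∧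
    (∀ z : ℂ, ‖z‖ < 1 → HasSum (fun n => y n / Real.sqrt (wt n) * z ^ n) (dfun y z)) :=
  memDirichlet_of_series (by simpa only [dfun_wt] using (L2_hasSum y).summable) fun z _ => rfl

lemma dfun_norm (y : L2) : dirNormSq (dfun y) = ‖y‖ ^ 2 := by
  have := dirNormSq_hasSum (dfun_props y).1
  simp only [(dfun_props y).2.1, dfun_wt] at this
  exact this.unique (L2_hasSum y)

lemma dfun_surj {f : ℂ → ℂ} (hf : MemDirichlet f) : ∃ y : L2, ∀ z : ℂ, ‖z‖ < 1 → dfun y z = f z := by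
  have hs : ∀ n, Real.sqrt (wt n) ≠ 0 := fun n => (Real.sqrt_pos.2 (wt_pos n)).ne'
  obtain ⟨y, hy⟩ := L2_mk (y := fun n => Real.sqrt (wt n) * taylorCoeff f n) (by
    refine (dirNormSq_hasSum hf).summable.congr fun n => ?_
    rw [norm_mul, Complex.norm_real, Real.norm_of_nonneg (Real.sqrt_nonneg _), mul_pow, Real.sq_sqrt (wt_pos n).le])
  refine ⟨y, fun z hz => ?_⟩
  refine ((dfun_props y).2.2 z hz).unique ((hasSum_taylor hf.1 hz).congr_fun' fun n => ?_)
  rw [hy]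
  have : (Real.sqrt (wt n) : ℂ) ≠ 0 := by exact_mod_cast hs n
  field_simp

lemma dfun_inj {x y : L2} (h : ∀ z : ℂ, ‖z‖ < 1 → dfun x z = dfun y z) : x = y := by
  have hs : ∀ n, Real.sqrt (wt n) ≠ 0 := fun n => (Real.sqrt_pos.2 (wt_pos n)).ne'
  have h1 := (dfun_props x).2.2
  have h2 := (diff_of_hasSum (f := dfun x) (a := fun n => y n / Real.sqrt (wt n)) fun z hz => by
    rw [h z hz]; exact (dfun_props y).2.2 z hz).2
  ext n
  have h3 := h2 n
  rw [(dfun_props x).2.1] at h3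
  have : (Real.sqrt (wt n) : ℂ) ≠ 0 := by exact_mod_cast hs n
  field_simp at h3
  exact h3

lemma dfun_add (x y : L2) {z : ℂ} (hz : ‖z‖ < 1) : dfun (x + y) z = dfun x z + dfun y z := by
  refine ((dfun_props _).2.2 z hz).unique ((((dfun_props x).2.2 z hz).add ((dfun_props y).2.2 z hz)).congr_fun' fun n => ?_)
  simp; ring

lemma dfun_smul (c : ℂ) (y : L2) {z : ℂ} (hz : ‖z‖ < 1) : dfun (c • y) z = c * dfun y z := by
  refine ((dfun_props _).2.2 z hz).unique ((((dfun_props y).2.2 z hz).mul_left c).congr_fun' fun n => ?_)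
  simp; ring

lemma dfun_tendsto {ι : Type*} {l : Filter ι} {Y : ι → L2} {y : L2} (h : Tendsto Y l (nhds y)) {z : ℂ} (hz : ‖z‖ < 1) :
    Tendsto (fun i => dfun (Y i) z) l (nhds (dfun y z)) := by
  let φ : L2 →ₗ[ℂ] ℂ := { toFun := fun y => dfun y z, map_add' := fun x y => dfun_add x y hz, map_smul' := fun c y => dfun_smul c y hz }
  have : Continuous φ := by
    refine φ.mkContinuous (Real.sqrt (kap z)) (fun y => ?_) |>.continuous
    have h1 := pointwise_bound (dfun_props y).1 hz
    rw [dfun_norm, ] at h1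
    have h2 : ‖dfun y z‖ ≤ Real.sqrt (‖y‖ ^ 2 * kap z) := Real.le_sqrt_of_sq_le h1
    rwa [Real.sqrt_mul (by positivity), Real.sqrt_sq (norm_nonneg _), mul_comm] at h2
  exact (this.tendsto y).comp h

lemma dirNormSq_congr {f g : ℂ → ℂ} (h : ∀ z : ℂ, ‖z‖ < 1 → f z = g z) : dirNormSq f = dirNormSq g := by
  unfold dirNormSq
  rw [h 0 (by simp)]
  congr 2
  refine setIntegral_congr_fun isOpen_unitDisc.measurableSet fun z hz => ?_
  have : f =ᶠ[nhds z] g := by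
    filter_upwards [isOpen_unitDisc.mem_nhds hz] with w hw using h w (mem_unitDisc.1 hw)
  simp only [this.deriv_eq]

lemma memDirichlet_congr {f g : ℂ → ℂ} (h : ∀ z : ℂ, ‖z‖ < 1 → f z = g z) (hg : MemDirichlet g) : MemDirichlet f := by
  refine ⟨hg.1.congr fun z hz => h z (mem_unitDisc.1 hz), hg.2.congr_fun (fun z hz => ?_) isOpen_unitDisc.measurableSet⟩
  have : f =ᶠ[nhds z] g := by
    filter_upwards [isOpen_unitDisc.mem_nhds hz] with w hw using h w (mem_unitDisc.1 hw)
  simp only [this.deriv_eq]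

lemma multiplier_bounded {u : ℂ → ℂ} (hu : u ∈ dirichletMultipliers) :
    ∃ C : ℝ, 0 ≤ C ∧ ∀ f, MemDirichlet f → dirNormSq (fun z => u z * f z) ≤ C * dirNormSq f := by
  have hex : ∀ y : L2, ∃ x : L2, ∀ z : ℂ, ‖z‖ < 1 → dfun x z = u z * dfun y z := fun y =>
    dfun_surj (hu.2 _ (dfun_props y).1)
  choose T hT using hex
  let T' : L2 →ₗ[ℂ] L2 :=
    { toFun := T
      map_add' := fun x y => dfun_inj fun z hz => by
        rw [hT _ z hz, dfun_add _ _ hz, dfun_add _ _ hz, hT _ z hz, hT _ z hz]; ring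
      map_smul' := fun c y => dfun_inj fun z hz => by
        rw [hT _ z hz, RingHom.id_apply, dfun_smul _ _ hz, dfun_smul _ _ hz, hT _ z hz]; ring }
  have hc : Continuous T' := by
    refine T'.continuous_of_seq_closed_graph fun Y x y h1 h2 => ?_
    refine dfun_inj fun z hz => ?_
    have h3 := dfun_tendsto h2 hz
    have h4 := (dfun_tendsto h1 hz).const_mul (u z)
    refine tendsto_nhds_unique h3 ?_
    change Tendsto _ _ (nhds (dfun (T x) z))
    rw [hT x z hz]
    refine h4.congr fun n => ?_
    exact (hT (Y n) z hz).symm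
  let T'' : L2 →L[ℂ] L2 := ⟨T', hc⟩
  refine ⟨‖T''‖ ^ 2, by positivity, fun f hf => ?_⟩
  obtain ⟨y, hy⟩ := dfun_surj hf
  rw [dirNormSq_congr (f := f) (g := dfun y) (fun z hz => (hy z hz).symm),
    dirNormSq_congr (g := dfun (T y)) (fun z hz => by rw [hT y z hz, hy z hz]), dfun_norm, dfun_norm, ← mul_pow]
  gcongr
  exact T''.le_opNorm y

lemma dirNormSq_comp {φ : ℂ → ℂ} {N : ℕ} (hφ : DifferentiableOn ℂ φ unitDisc)
    (hm : MapsTo φ unitDisc unitDisc)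
    (hN : ∀ w : ℂ, ∀ s : Finset ℂ, (∀ z ∈ s, z ∈ unitDisc ∧ φ z = w) → s.card ≤ N) :
    ∃ C : ℝ, 0 ≤ C ∧ ∀ f, MemDirichlet f → dirNormSq (fun z => f (φ z)) ≤ C * dirNormSq f := by
  have h0 : ‖φ 0‖ < 1 := mem_unitDisc.1 (hm (mem_unitDisc.2 (by simp)))
  refine ⟨kap (φ 0) + N, by have := one_le_kap h0; positivity, fun f hf => ?_⟩
  rw [dirNormSq_eq_dirInt (f := fun z => f (φ z)) (hf.1.comp hφ hm)]
  have h1 := pointwise_bound hf h0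
  have ht := (memDirichlet_iff_dirInt hf.1).1 hf
  have h2 := ENNReal.toReal_mono (ENNReal.mul_ne_top (ENNReal.natCast_ne_top N) ht) (dirInt_comp_le hφ hm hN hf.1)
  rw [ENNReal.toReal_mul, ENNReal.toReal_natCast] at h2
  have h3 : 1 / Real.pi * (dirInt f).toReal ≤ dirNormSq f := by
    rw [dirNormSq_eq_dirInt hf.1]; nlinarith [sq_nonneg ‖f 0‖]
  have h4 : 1 / Real.pi * (dirInt fun z => f (φ z)).toReal ≤ N * dirNormSq f := by
    calc _ ≤ 1 / Real.pi * (N * (dirInt f).toReal) := by gcongr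
      _ = N * (1 / Real.pi * (dirInt f).toReal) := by ring
      _ ≤ _ := by gcongr
  linarith

lemma L2_shift_exists (y : L2) : ∃ x : L2, ∀ n, x n = y (n + 1) :=
  L2_mk ((summable_nat_add_iff 1).2 (L2_hasSum y).summable)

/-- backward shift, as a function -/
def bsh (y : L2) : L2 := (L2_shift_exists y).choose

lemma bsh_apply (y : L2) (n : ℕ) : bsh y n = y (n + 1) := (L2_shift_exists y).choose_spec n

lemma bsh_norm (y : L2) : ‖y‖ ^ 2 = ‖y 0‖ ^ 2 + ‖bsh y‖ ^ 2 := by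
  have h := L2_hasSum y
  have h2 := L2_hasSum (bsh y)
  rw [← h.tsum_eq, h.summable.tsum_eq_zero_add, ← h2.tsum_eq]
  simp only [bsh_apply]

/-- backward shift -/
def bS : L2 →L[ℂ] L2 :=
  LinearMap.mkContinuous
    { toFun := bsh
      map_add' := fun x y => by ext n; simp [bsh_apply]
      map_smul' := fun c y => by ext n; simp [bsh_apply] } 1 (fun y => by
        rw [one_mul]
        refine abs_le_of_sq_le_sq' ?_ (norm_nonneg _) |>.2
        have := bsh_norm y
        change ‖bsh y‖ ^ 2 ≤ _
        nlinarith [sq_nonneg ‖y 0‖])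

lemma bS_apply (y : L2) (n : ℕ) : bS y n = y (n + 1) := bsh_apply y n
lemma bS_norm_sq (y : L2) : ‖y‖ ^ 2 = ‖y 0‖ ^ 2 + ‖bS y‖ ^ 2 := bsh_norm y
lemma bS_norm : ‖bS‖ ≤ 1 := LinearMap.mkContinuous_norm_le _ zero_le_one _

lemma bS_pow_apply (y : L2) (k n : ℕ) : (bS ^ k) y n = y (n + k) := by
  induction k generalizing n with
  | zero => simp
  | succ k ih => rw [pow_succ', mul_apply_eq_comp, bS_apply, ih, show n + 1 + k = n + (k + 1) by ring]

/-- resolvent of the backward shift -/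
lemma exists_resolvent {a : ℂ} (ha : ‖a‖ < 1) : ∃ R : L2 →L[ℂ] L2, Commute R bS ∧
    (∀ y, R y - a • bS (R y) = y) := by
  have h : ‖a • bS‖ < 1 := by
    rw [norm_smul]
    nlinarith [bS_norm, norm_nonneg a, norm_nonneg bS]
  let U := Units.oneSub (a • bS) h
  have hU : (U : L2 →L[ℂ] L2) = 1 - a • bS := rfl
  refine ⟨((U⁻¹ : (L2 →L[ℂ] L2)ˣ) : L2 →L[ℂ] L2), ?_, fun y => ?_⟩
  · refine Commute.units_inv_left ?_
    rw [hU]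
    exact (Commute.one_left _).sub_left ((Commute.refl bS).smul_left a)
  · have : (U : L2 →L[ℂ] L2) * ((U⁻¹ : (L2 →L[ℂ] L2)ˣ) : L2 →L[ℂ] L2) = 1 := Units.mul_inv U
    have := congrArg (fun T : L2 →L[ℂ] L2 => T y) this
    rw [hU] at this
    simpa using this

/-- Hardy evaluation -/
def ev (z : ℂ) (y : L2) : ℂ := ∑' n, y n * z ^ n

lemma ev_hasSum {z : ℂ} (hz : ‖z‖ < 1) (y : L2) : HasSum (fun n => y n * z ^ n) (ev z y) := by
  refine (Summable.of_norm (hasSum_of_bdd (C := ‖y‖) (fun n => ?_) hz)).hasSum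
  exact lp.norm_apply_le_norm (by norm_num) y n

lemma ev_add {z : ℂ} (hz : ‖z‖ < 1) (x y : L2) : ev z (x + y) = ev z x + ev z y := by
  refine (ev_hasSum hz _).unique (((ev_hasSum hz x).add (ev_hasSum hz y)).congr_fun' fun n => ?_)
  simp; ring

lemma ev_smul {z : ℂ} (hz : ‖z‖ < 1) (c : ℂ) (y : L2) : ev z (c • y) = c * ev z y := by
  refine (ev_hasSum hz _).unique (((ev_hasSum hz y).mul_left c).congr_fun' fun n => ?_)
  simp; ring

lemma ev_sub {z : ℂ} (hz : ‖z‖ < 1) (x y : L2) : ev z (x - y) = ev z x - ev z y := by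
  refine (ev_hasSum hz _).unique (((ev_hasSum hz x).sub (ev_hasSum hz y)).congr_fun' fun n => ?_)
  simp; ring

lemma ev_bS {z : ℂ} (hz : ‖z‖ < 1) (y : L2) : ev z y = y 0 + z * ev z (bS y) := by
  have h := (ev_hasSum hz y)
  rw [← h.tsum_eq, h.summable.tsum_eq_zero_add]
  have h2 := ((ev_hasSum hz (bS y)).mul_left z).tsum_eq
  rw [← h2]
  simp only [pow_zero, mul_one, bS_apply]
  congr 2; ext n; ring

lemma ev_bound {z : ℂ} (hz : ‖z‖ < 1) (y : L2) : ‖ev z y‖ ^ 2 ≤ ‖y‖ ^ 2 * (1 - ‖z‖ ^ 2)⁻¹ := by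
  have h1 : ‖z‖ ^ 2 < 1 := by nlinarith [norm_nonneg z]
  refine cs_hasSum (ev_hasSum hz y) (L2_hasSum y) (hasSum_geometric_of_lt_one (by positivity) h1)
    (fun n => by positivity) (fun n => by positivity) fun n => ?_
  rw [norm_mul, norm_pow]; ring

/-- The Blaschke factor. -/
def bl (a z : ℂ) : ℂ := (a - z) / (1 - (starRingEnd ℂ) a * z)

lemma bl_den_ne {a z : ℂ} (ha : ‖a‖ < 1) (hz : ‖z‖ ≤ 1) : 1 - (starRingEnd ℂ) a * z ≠ 0 := by
  intro h
  have : ‖(starRingEnd ℂ) a * z‖ = 1 := by rw [← sub_eq_zero.1 h]; simp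
  rw [norm_mul, RCLike.norm_conj] at this
  nlinarith [norm_nonneg a, norm_nonneg z]

lemma bl_den_lower {a z : ℂ} (hz : ‖z‖ ≤ 1) : 1 - ‖a‖ ≤ ‖1 - (starRingEnd ℂ) a * z‖ := by
  have := norm_sub_norm_le (1 : ℂ) ((starRingEnd ℂ) a * z)
  rw [norm_mul, RCLike.norm_conj, norm_one] at this
  nlinarith [norm_nonneg a, norm_nonneg z]

lemma norm_sub_sq_sub (x y : L2) (a : ℂ) :
    ‖x - a • y‖ ^ 2 - ‖(starRingEnd ℂ) a • x - y‖ ^ 2 = (1 - ‖a‖ ^ 2) * (‖x‖ ^ 2 - ‖y‖ ^ 2) := by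
  have h1 := @norm_sub_sq ℂ _ _ _ _ x (a • y)
  have h2 := @norm_sub_sq ℂ _ _ _ _ ((starRingEnd ℂ) a • x) y
  rw [inner_smul_right, norm_smul, mul_pow] at h1
  rw [inner_smul_left, norm_smul, mul_pow, RCLike.norm_conj, RCLike.conj_conj] at h2
  rw [h1, h2]; ring

lemma one_step {a : ℂ} (ha : ‖a‖ < 1) : ∃ (L : L2 →L[ℂ] L2) (c : L2 → ℂ), Commute L bS ∧
    (∀ y z, ‖z‖ < 1 → ev z y = c y * (1 - (starRingEnd ℂ) a * z)⁻¹ + bl a z * ev z (L y)) ∧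
    (∀ y, ‖c y‖ ^ 2 ≤ ‖y‖ ^ 2 - ‖L y‖ ^ 2) ∧ (a = 0 → L = - bS) := by
  obtain ⟨R, hR, hR2⟩ := exists_resolvent ha
  refine ⟨((starRingEnd ℂ) a • 1 - bS) * R, fun y => (1 - ‖a‖ ^ 2 : ℝ) * (R y) 0, ?_, ?_, ?_, ?_⟩
  · refine Commute.mul_left ?_ hR
    exact ((Commute.one_left _).smul_left _).sub_left (Commute.refl bS)
  · intro y z hz
    have hd := bl_den_ne ha hz.le
    set x := R y with hx
    have h1 : ev z y = ev z x - a * ev z (bS x) := by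
      conv_lhs => rw [← hR2 y]
      rw [ev_sub hz, ev_smul hz]
    have h2 : ev z ((((starRingEnd ℂ) a • 1 - bS) * R) y) = (starRingEnd ℂ) a * ev z x - ev z (bS x) := by
      rw [← ev_smul hz, ← ev_sub hz]; rfl
    rw [h1, h2, ev_bS hz x, bl]
    have h3 : (‖a‖ : ℂ) ^ 2 = a * (starRingEnd ℂ) a := (Complex.mul_conj' a).symm
    push_cast
    rw [h3, ← hx]
    have hi := inv_mul_cancel₀ hd
    rw [div_eq_mul_inv]
    generalize (1 - (starRingEnd ℂ) a * z)⁻¹ = i at hi ⊢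
    generalize (starRingEnd ℂ) a = b at hi ⊢
    linear_combination (-(x 0 : ℂ) - (z - a) * ev z (bS x)) * hi
  · intro y
    have h1 := norm_sub_sq_sub (R y) (bS (R y)) a
    rw [hR2] at h1
    have h2 : (((starRingEnd ℂ) a • 1 - bS) * R) y = (starRingEnd ℂ) a • R y - bS (R y) := rfl
    rw [h2, h1, bS_norm_sq (R y), norm_mul, Complex.norm_real, Real.norm_of_nonneg (by nlinarith [norm_nonneg a]), mul_pow]
    have : 0 ≤ (1 - ‖a‖ ^ 2) := by nlinarith [norm_nonneg a]
    have h5 : (1 - ‖a‖ ^ 2) ^ 2 ≤ 1 - ‖a‖ ^ 2 := by nlinarith [norm_nonneg a]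
    nlinarith [sq_nonneg ‖(R y) 0‖]
  · rintro rfl
    ext1 y
    have := hR2 y
    simp only [zero_smul, sub_zero] at this
    simp [this]

lemma bl_identity {a z : ℂ} (ha : ‖a‖ < 1) (hz : ‖z‖ ≤ 1) :
    (1 - ‖bl a z‖ ^ 2) * ‖1 - (starRingEnd ℂ) a * z‖ ^ 2 = (1 - ‖a‖ ^ 2) * (1 - ‖z‖ ^ 2) := by
  have hd : ‖1 - (starRingEnd ℂ) a * z‖ ≠ 0 := norm_ne_zero_iff.2 (bl_den_ne ha hz)
  rw [bl, norm_div, div_pow, sub_mul, div_mul_cancel₀ _ (pow_ne_zero 2 hd)]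
  simp only [← Complex.normSq_eq_norm_sq, Complex.normSq_apply]
  simp
  ring

lemma bl_norm_le {a z : ℂ} (ha : ‖a‖ < 1) (hz : ‖z‖ ≤ 1) : ‖bl a z‖ ≤ 1 := by
  have h := bl_identity ha hz
  have hd : 0 < ‖1 - (starRingEnd ℂ) a * z‖ ^ 2 := by
    have := norm_pos_iff.2 (bl_den_ne ha hz); positivity
  have h2 : 0 ≤ (1 - ‖a‖ ^ 2) * (1 - ‖z‖ ^ 2) :=
    mul_nonneg (by nlinarith [norm_nonneg a]) (by nlinarith [norm_nonneg z])
  rw [← h] at h2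
  have := nonneg_of_mul_nonneg_left h2 hd
  nlinarith [norm_nonneg (bl a z)]

lemma bl_norm_lt {a z : ℂ} (ha : ‖a‖ < 1) (hz : ‖z‖ < 1) : ‖bl a z‖ < 1 := by
  have h := bl_identity ha hz.le
  have hd : 0 < ‖1 - (starRingEnd ℂ) a * z‖ ^ 2 := by
    have := norm_pos_iff.2 (bl_den_ne ha hz.le); positivity
  have h2 : 0 < (1 - ‖a‖ ^ 2) * (1 - ‖z‖ ^ 2) :=
    mul_pos (by nlinarith [norm_nonneg a]) (by nlinarith [norm_nonneg z])
  rw [← h] at h2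
  have := pos_of_mul_pos_left h2 hd.le
  nlinarith [norm_nonneg (bl a z)]

lemma bl_one_sub {a z : ℂ} (ha : ‖a‖ < 1) (hz : ‖z‖ < 1) :
    1 - ‖bl a z‖ ^ 2 ≤ 1 / (1 - ‖a‖) ^ 2 * (1 - ‖z‖ ^ 2) := by
  have h := bl_identity ha hz.le
  have h1 := bl_den_lower (a := a) hz.le
  have h2 := bl_norm_lt ha hz
  have h0 : 0 < 1 - ‖a‖ := by linarith
  rw [div_mul_eq_mul_div, one_mul, le_div_iff₀ (by positivity)]
  calc (1 - ‖bl a z‖ ^ 2) * (1 - ‖a‖) ^ 2 ≤ (1 - ‖bl a z‖ ^ 2) * ‖1 - (starRingEnd ℂ) a * z‖ ^ 2 := by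
        have : 0 ≤ 1 - ‖bl a z‖ ^ 2 := by nlinarith [norm_nonneg (bl a z)]
        gcongr
    _ = (1 - ‖a‖ ^ 2) * (1 - ‖z‖ ^ 2) := h
    _ ≤ 1 * (1 - ‖z‖ ^ 2) := by
        have : 0 ≤ 1 - ‖z‖ ^ 2 := by nlinarith [norm_nonneg z]
        gcongr
        nlinarith [norm_nonneg a]
    _ = _ := one_mul _

lemma dec_exists (n : ℕ) (a : Fin n → ℂ) (ha : ∀ j, ‖a j‖ < 1) :
    ∃ (L : L2 →L[ℂ] L2) (e : Fin n → ℂ → ℂ) (c : Fin n → L2 → ℂ), Commute L bS ∧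
      (∀ j, ∃ M : ℝ, ∀ z, ‖z‖ < 1 → ‖e j z‖ ≤ M) ∧
      (∀ y z, ‖z‖ < 1 → ev z y = ∑ j, c j y * e j z + (∏ j, bl (a j) z) * ev z (L y)) ∧
      (∀ y, ∑ j, ‖c j y‖ ^ 2 ≤ ‖y‖ ^ 2 - ‖L y‖ ^ 2) ∧
      ((∃ j, a j = 0) → ∃ C : L2 →L[ℂ] L2, (∀ y, ‖C y‖ ≤ ‖y‖) ∧ Commute C bS ∧ L = C * bS) := by
  induction n with
  | zero =>
    refine ⟨1, fun j => j.elim0, fun j => j.elim0, Commute.one_left _, fun j => j.elim0, ?_, ?_, ?_⟩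
    · intro y z hz; simp
    · intro y; simp
    · rintro ⟨j, _⟩; exact j.elim0
  | succ n ih =>
    obtain ⟨L', e', c', h1', h2', h3', h4', h5'⟩ := ih (fun j => a j.succ) (fun j => ha _)
    obtain ⟨L0, c0, h1, h2, h3, h4⟩ := one_step (ha 0)
    have contr : ∀ y, ‖L' y‖ ≤ ‖y‖ := fun y => by
      have h := h4' y
      have : 0 ≤ ∑ j, ‖c' j y‖ ^ 2 := Finset.sum_nonneg fun _ _ => by positivity
      exact abs_le_of_sq_le_sq' (by linarith) (norm_nonneg _) |>.2
    have contr0 : ∀ y, ‖L0 y‖ ≤ ‖y‖ := fun y => by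
      have h := h3 y
      have : 0 ≤ ‖c0 y‖ ^ 2 := by positivity
      exact abs_le_of_sq_le_sq' (by linarith) (norm_nonneg _) |>.2
    refine ⟨L' * L0, Fin.cons (fun z => (1 - (starRingEnd ℂ) (a 0) * z)⁻¹) (fun j z => bl (a 0) z * e' j z),
      Fin.cons c0 (fun j y => c' j (L0 y)), h1'.mul_left h1, ?_, ?_, ?_, ?_⟩
    · intro j
      refine Fin.cases ?_ (fun j => ?_) j
      · refine ⟨(1 - ‖a 0‖)⁻¹, fun z hz => ?_⟩
        rw [Fin.cons_zero, norm_inv]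
        have := ha 0
        exact inv_anti₀ (by linarith) (bl_den_lower hz.le)
      · obtain ⟨M, hM⟩ := h2' j
        refine ⟨M, fun z hz => ?_⟩
        rw [Fin.cons_succ, norm_mul]
        have := bl_norm_le (ha 0) hz.le
        nlinarith [hM z hz, norm_nonneg (e' j z), norm_nonneg (bl (a 0) z)]
    · intro y z hz
      rw [Fin.sum_univ_succ, Fin.prod_univ_succ, h2 y z hz, h3' (L0 y) z hz]
      simp only [Fin.cons_zero, Fin.cons_succ]
      rw [mul_add, Finset.mul_sum]
      simp only [mul_apply_eq_comp]
      rw [add_assoc, mul_assoc]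
      congr 2
      refine Finset.sum_congr rfl fun j _ => ?_
      ring
    · intro y
      rw [Fin.sum_univ_succ]
      simp only [Fin.cons_zero, Fin.cons_succ, mul_apply_eq_comp]
      linarith [h3 y, h4' (L0 y)]
    · rintro ⟨j, hj⟩
      by_cases h0 : a 0 = 0
      · refine ⟨-L', fun y => by simpa using contr y, h1'.neg_left, ?_⟩
        rw [h4 h0]; simp
      · have : ∃ j : Fin n, a j.succ = 0 := by
          rcases Fin.eq_zero_or_eq_succ j with h | ⟨i, h⟩
          · exact absurd (h ▸ hj) h0
          · exact ⟨i, h ▸ hj⟩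
        obtain ⟨C, hC1, hC2, hC3⟩ := h5' this
        refine ⟨C * L0, fun y => (hC1 _).trans (contr0 y), hC2.mul_left h1, ?_⟩
        rw [hC3, mul_assoc, mul_assoc, h1.eq]

lemma abel_sum (A : ℕ → ℝ) (N : ℕ) : ∑ k ∈ Finset.range N, (k : ℝ) * (A k - A (k + 1)) =
    ∑ k ∈ Finset.range N, A (k + 1) - N * A N := by
  induction N with
  | zero => simp
  | succ N ih => rw [Finset.sum_range_succ, Finset.sum_range_succ, ih]; push_cast; ring

/-- Dirichlet seminorm of a sequence -/
def Qd (y : L2) : ℝ := ∑' n : ℕ, n * ‖y n‖ ^ 2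

lemma Qd_bS {y : L2} (h : Summable fun n : ℕ => n * ‖y n‖ ^ 2) :
    (Summable fun n : ℕ => n * ‖bS y n‖ ^ 2) ∧ ‖bS y‖ ^ 2 = Qd y - Qd (bS y) := by
  have h1 : HasSum (fun n : ℕ => ((n + 1 : ℕ) : ℝ) * ‖y (n + 1)‖ ^ 2) (Qd y) := by
    have := (hasSum_nat_add_iff' 1).2 h.hasSum
    simpa [Qd] using this
  have h2 := h1.sub (L2_hasSum (bS y))
  have e : (fun n : ℕ => ((n + 1 : ℕ) : ℝ) * ‖y (n + 1)‖ ^ 2 - ‖bS y n‖ ^ 2) = fun n : ℕ => n * ‖bS y n‖ ^ 2 := by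
    ext n; rw [bS_apply]; push_cast; ring
  rw [e] at h2
  refine ⟨h2.summable, ?_⟩
  rw [Qd, Qd, h2.tsum_eq, Qd]; ring

lemma sum_bS_pow {y : L2} (h : Summable fun n : ℕ => n * ‖y n‖ ^ 2) (N : ℕ) :
    (Summable fun n : ℕ => n * ‖(bS ^ N) y n‖ ^ 2) ∧
    ∑ k ∈ Finset.range N, ‖(bS ^ (k + 1)) y‖ ^ 2 = Qd y - Qd ((bS ^ N) y) := by
  induction N with
  | zero => simpa using h
  | succ N ih =>
    have := Qd_bS ih.1
    rw [pow_succ' bS N, mul_apply_eq_comp]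
    refine ⟨this.1, ?_⟩
    rw [Finset.sum_range_succ, ih.2, pow_succ' bS N, mul_apply_eq_comp, this.2]
    ring

lemma sum_bS_pow_le {y : L2} (h : Summable fun n : ℕ => n * ‖y n‖ ^ 2) (N : ℕ) :
    ∑ k ∈ Finset.range N, ‖(bS ^ (k + 1)) y‖ ^ 2 ≤ Qd y := by
  rw [(sum_bS_pow h N).2]
  have : 0 ≤ Qd ((bS ^ N) y) := tsum_nonneg fun n => by positivity
  linarith

lemma hardy_seq {g : ℂ → ℂ} (hg : MemDirichlet g) : ∃ y : L2, (∀ n, y n = taylorCoeff g n) ∧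
    (Summable fun n : ℕ => n * ‖y n‖ ^ 2) ∧ ∀ z, ‖z‖ < 1 → ev z y = g z := by
  obtain ⟨y, hy⟩ := L2_mk (y := taylorCoeff g) (by
    refine Summable.of_nonneg_of_le (fun n => by positivity) (fun n => ?_) (dirNormSq_hasSum hg).summable
    nlinarith [one_le_wt n, sq_nonneg ‖taylorCoeff g n‖])
  refine ⟨y, hy, ?_, fun z hz => ?_⟩
  · simp only [hy]; exact (memDirichlet_iff hg.1).1 hg
  · refine (ev_hasSum hz y).unique ?_
    simp only [hy]; exact hasSum_taylor hg.1 hz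

lemma decomposition {n : ℕ} {a : Fin n → ℂ} (ha : ∀ j, ‖a j‖ < 1) (h0 : ∃ j, a j = 0) {κ : ℂ} (hκ : ‖κ‖ = 1)
    {g : ℂ → ℂ} (hg : MemDirichlet g) :
    ∃ (e f : Fin n → ℂ → ℂ), (∀ j, ∃ M : ℝ, ∀ z, ‖z‖ < 1 → ‖e j z‖ ≤ M) ∧ (∀ j, MemDirichlet (f j)) ∧
      ∀ z, ‖z‖ < 1 → g z = ∑ j, e j z * f j (κ * ∏ j, bl (a j) z) := by
  obtain ⟨L, e, c, h1, h2, h3, h4, h5⟩ := dec_exists n a ha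
  obtain ⟨C, hC1, hC2, hC3⟩ := h5 h0
  obtain ⟨y, hy, hyQ, hyg⟩ := hardy_seq hg
  have hκ0 : κ ≠ 0 := by intro h; simp [h] at hκ
  set A : ℕ → ℝ := fun k => ‖(L ^ k) y‖ ^ 2 with hA
  have hstep : ∀ k j, ‖c j ((L ^ k) y)‖ ^ 2 ≤ A k - A (k + 1) := by
    intro k j
    have := h4 ((L ^ k) y)
    have h' : ‖c j ((L ^ k) y)‖ ^ 2 ≤ ∑ j, ‖c j ((L ^ k) y)‖ ^ 2 :=
      Finset.single_le_sum (f := fun j => ‖c j ((L ^ k) y)‖ ^ 2) (fun _ _ => by positivity) (Finset.mem_univ j)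
    simp only [hA, pow_succ', mul_apply_eq_comp]
    linarith
  have hCk : ∀ k x, ‖(C ^ k) x‖ ≤ ‖x‖ := by
    intro k
    induction k with
    | zero => intro x; simp
    | succ k ih => intro x; rw [pow_succ, mul_apply_eq_comp]; exact (ih _).trans (hC1 x)
  have hAb : ∀ k, A k ≤ ‖(bS ^ k) y‖ ^ 2 := by
    intro k
    simp only [hA]
    rw [hC3, hC2.mul_pow, mul_apply_eq_comp]
    have := hCk k ((bS ^ k) y)
    gcongr
  have hA0 : ∀ k, 0 ≤ A k := fun k => by positivity
  have hAle : ∀ k, A k ≤ ‖y‖ ^ 2 := by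
    intro k
    induction k with
    | zero => simp [hA]
    | succ k ih =>
      have := h4 ((L ^ k) y)
      have h' : 0 ≤ ∑ j, ‖c j ((L ^ k) y)‖ ^ 2 := Finset.sum_nonneg fun _ _ => by positivity
      have h'' : A (k + 1) = ‖L ((L ^ k) y)‖ ^ 2 := by simp only [hA, pow_succ', mul_apply_eq_comp]
      rw [h'']; linarith
  let b : Fin n → ℕ → ℂ := fun j k => c j ((L ^ k) y) * (κ⁻¹) ^ k
  have hbn : ∀ j k, ‖b j k‖ = ‖c j ((L ^ k) y)‖ := by
    intro j k; simp [b, hκ]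
  have hb : ∀ j, Summable fun k : ℕ => wt k * ‖b j k‖ ^ 2 := by
    intro j
    rw [summable_wt_iff]
    refine summable_of_sum_range_le (c := Qd y) (fun k => by positivity) fun N => ?_
    calc ∑ k ∈ Finset.range N, (k : ℝ) * ‖b j k‖ ^ 2 ≤ ∑ k ∈ Finset.range N, (k : ℝ) * (A k - A (k + 1)) := by
          refine Finset.sum_le_sum fun k _ => ?_
          rw [hbn]
          exact mul_le_mul_of_nonneg_left (hstep k j) (by positivity)
      _ ≤ ∑ k ∈ Finset.range N, A (k + 1) := by
          rw [abel_sum]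
          have := hA0 N
          have : 0 ≤ N * A N := by positivity
          linarith
      _ ≤ ∑ k ∈ Finset.range N, ‖(bS ^ (k + 1)) y‖ ^ 2 := Finset.sum_le_sum fun k _ => hAb _
      _ ≤ Qd y := sum_bS_pow_le hyQ N
  have hf := fun j => memDirichlet_of_series (f := fun w => ∑' k, b j k * w ^ k) (hb j) (fun w _ => rfl)
  refine ⟨e, fun j w => ∑' k, b j k * w ^ k, h2, fun j => (hf j).1, fun z hz => ?_⟩
  set P := ∏ j, bl (a j) z with hP
  have hP1 : ‖P‖ < 1 := by
    obtain ⟨j, hj⟩ := h0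
    rw [hP, norm_prod, ← Finset.mul_prod_erase _ _ (Finset.mem_univ j)]
    have h6 : ∏ i ∈ Finset.univ.erase j, ‖bl (a i) z‖ ≤ 1 :=
      Finset.prod_le_one (fun _ _ => norm_nonneg _) fun i _ => bl_norm_le (ha i) hz.le
    have h7 : 0 ≤ ∏ i ∈ Finset.univ.erase j, ‖bl (a i) z‖ := Finset.prod_nonneg fun _ _ => norm_nonneg _
    nlinarith [bl_norm_lt (ha j) hz, norm_nonneg (bl (a j) z)]
  have hiter : ∀ N, ev z y = ∑ k ∈ Finset.range N, ∑ j, e j z * (b j k * (κ * P) ^ k) + P ^ N * ev z ((L ^ N) y) := by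
    intro N
    induction N with
    | zero => simp
    | succ N ih =>
      rw [Finset.sum_range_succ, ih, h3 ((L ^ N) y) z hz, ← hP, mul_add, ← add_assoc, pow_succ' L N, mul_apply_eq_comp]
      congr 1
      · congr 1
        rw [Finset.mul_sum]
        refine Finset.sum_congr rfl fun j _ => ?_
        simp only [b]
        rw [mul_pow, inv_pow]
        have := pow_ne_zero N hκ0
        field_simp
      · ring
  have ht0 : Tendsto (fun N => P ^ N * ev z ((L ^ N) y)) atTop (nhds 0) := by
    have hz2 : 0 < 1 - ‖z‖ ^ 2 := by nlinarith [norm_nonneg z]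
    refine squeeze_zero_norm (a := fun N => ‖P‖ ^ N * Real.sqrt (‖y‖ ^ 2 * (1 - ‖z‖ ^ 2)⁻¹)) (fun N => ?_) ?_
    · rw [norm_mul, norm_pow]
      gcongr
      refine Real.le_sqrt_of_sq_le ((ev_bound hz _).trans ?_)
      have := hAle N
      gcongr
    · have := (tendsto_pow_atTop_nhds_zero_of_lt_one (norm_nonneg P) hP1).mul_const (Real.sqrt (‖y‖ ^ 2 * (1 - ‖z‖ ^ 2)⁻¹))
      rwa [zero_mul] at this
  have hκP : ‖κ * P‖ < 1 := by rwa [norm_mul, hκ, one_mul]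
  have hs : HasSum (fun k => ∑ j, e j z * (b j k * (κ * P) ^ k)) (∑ j, e j z * ∑' k, b j k * (κ * P) ^ k) :=
    hasSum_sum fun j _ => ((hf j).2.2 (κ * P) hκP).mul_left _
  have ht1 := hs.tendsto_sum_nat.add ht0
  rw [add_zero] at ht1
  refine tendsto_nhds_unique ?_ ht1
  rw [← hyg z hz]
  refine tendsto_const_nhds.congr hiter

lemma bl_diff {a : ℂ} (ha : ‖a‖ < 1) : DifferentiableOn ℂ (bl a) unitDisc := by
  intro z hz
  have := bl_den_ne ha (mem_unitDisc.1 hz).le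
  unfold bl
  apply DifferentiableWithinAt.div <;> first | fun_prop | exact this

lemma bl_invol {a z : ℂ} (ha : ‖a‖ < 1) (hz : ‖z‖ < 1) : bl a (bl a z) = z := by
  have h1 := bl_den_ne ha hz.le
  have h2 := bl_den_ne ha (bl_norm_le ha hz.le)
  have h3 := bl_den_ne ha ha.le
  unfold bl at h2
  have e : 1 - (starRingEnd ℂ) a * ((a - z) / (1 - (starRingEnd ℂ) a * z)) =
    (1 - (starRingEnd ℂ) a * a) / (1 - (starRingEnd ℂ) a * z) := by
    field_simp; ring
  unfold bl
  rw [e]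
  have e2 : a - (a - z) / (1 - (starRingEnd ℂ) a * z) = z * (1 - (starRingEnd ℂ) a * a) / (1 - (starRingEnd ℂ) a * z) := by
    rw [eq_div_iff h1, sub_mul, div_mul_cancel₀ _ h1]; ring
  rw [e2, div_div_div_cancel_right₀ h1, mul_div_cancel_right₀ _ h3]

lemma bl_self (a : ℂ) : bl a a = 0 := by simp [bl]

lemma bl_comp {a b : ℂ} (ha : ‖a‖ < 1) (hb : ‖b‖ < 1) :
    ∃ l : ℂ, ‖l‖ = 1 ∧ ∀ z, ‖z‖ < 1 → bl b (bl a z) = l * bl (bl a b) z := by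
  have h1 := bl_den_ne ha hb.le
  have h2 := bl_den_ne hb ha.le
  refine ⟨-(1 - (starRingEnd ℂ) a * b) / (1 - (starRingEnd ℂ) b * a), ?_, fun z hz => ?_⟩
  · rw [norm_div, norm_neg, ← Complex.norm_conj (1 - (starRingEnd ℂ) b * a)]
    have : (starRingEnd ℂ) (1 - (starRingEnd ℂ) b * a) = 1 - (starRingEnd ℂ) a * b := by simp; ring
    rw [this, div_self (norm_ne_zero_iff.2 h1)]
  · have h3 := bl_den_ne ha hz.le
    have h4 := bl_den_ne hb (bl_norm_le ha hz.le)
    have h5 := bl_den_ne (bl_norm_lt ha hb) hz.le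
    have hc : (starRingEnd ℂ) (bl a b) * (1 - (starRingEnd ℂ) b * a) = (starRingEnd ℂ) a - (starRingEnd ℂ) b := by
      unfold bl
      rw [map_div₀]
      have : (starRingEnd ℂ) (1 - (starRingEnd ℂ) a * b) = 1 - (starRingEnd ℂ) b * a := by simp; ring
      rw [this, div_mul_cancel₀ _ h2]; simp
    have hc2 : bl a b * (1 - (starRingEnd ℂ) a * b) = a - b := by
      unfold bl; rw [div_mul_cancel₀ _ h1]
    have hc3 : bl a z * (1 - (starRingEnd ℂ) a * z) = a - z := by
      unfold bl; rw [div_mul_cancel₀ _ h3]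
    generalize bl a b = c at *
    generalize bl a z = x at *
    unfold bl
    rw [div_mul_div_comm, div_eq_div_iff h4 (mul_ne_zero h2 h5)]
    apply mul_right_cancel₀ h3
    have e1 : (b - x) * (1 - (starRingEnd ℂ) a * z) = -(1 - (starRingEnd ℂ) a * b) * (c - z) := by
      linear_combination -hc3 + hc2
    have e2 : (1 - (starRingEnd ℂ) b * a) * (1 - (starRingEnd ℂ) c * z) = (1 - (starRingEnd ℂ) b * x) * (1 - (starRingEnd ℂ) a * z) := by
      linear_combination (-z) * hc + (starRingEnd ℂ) b * hc3
    rw [e2, mul_right_comm, e1]; ring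

lemma fiber_count {n : ℕ} {a : Fin n → ℂ} (ha : ∀ j, ‖a j‖ < 1) {κ : ℂ} (hκ : ‖κ‖ = 1) {φ : ℂ → ℂ}
    (hm : MapsTo φ unitDisc unitDisc)
    (hφ : ∀ z, ‖z‖ < 1 → φ z = κ * ∏ j, bl (a j) z) (w : ℂ) (s : Finset ℂ)
    (hs : ∀ z ∈ s, z ∈ unitDisc ∧ φ z = w) : s.card ≤ n := by
  rcases s.eq_empty_or_nonempty with rfl | ⟨z0, hz0⟩
  · simp
  have hw : ‖w‖ < 1 := by
    rw [← (hs z0 hz0).2]; exact mem_unitDisc.1 (hm (hs z0 hz0).1)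
  classical
  let q : Polynomial ℂ := ∏ j, (Polynomial.C (a j) - Polynomial.X)
  let q' : Polynomial ℂ := ∏ j, (1 - Polynomial.C ((starRingEnd ℂ) (a j)) * Polynomial.X)
  let p : Polynomial ℂ := Polynomial.C κ * q - Polynomial.C w * q'
  have hqe : ∀ z, q.eval z = ∏ j, (a j - z) := fun z => by simp [q, Polynomial.eval_prod]
  have hqe' : ∀ z, q'.eval z = ∏ j, (1 - (starRingEnd ℂ) (a j) * z) := fun z => by
    simp [q', Polynomial.eval_prod]
  have hpe : ∀ z, p.eval z = κ * ∏ j, (a j - z) - w * ∏ j, (1 - (starRingEnd ℂ) (a j) * z) := fun z => by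
    simp [p, hqe, hqe']
  have hp0 : p ≠ 0 := by
    intro h
    have h1 := hpe 1
    rw [h, Polynomial.eval_zero, eq_comm, sub_eq_zero] at h1
    have h2 := congrArg norm h1
    rw [norm_mul, norm_mul, hκ, one_mul, norm_prod, norm_prod] at h2
    have h3 : ∀ j, ‖1 - (starRingEnd ℂ) (a j) * 1‖ = ‖a j - 1‖ := fun j => by
      rw [← Complex.norm_conj, norm_sub_rev]; simp
    simp only [h3] at h2
    have h4 : 0 < ∏ j, ‖a j - 1‖ := Finset.prod_pos fun j _ => by
      rw [← h3 j]; exact norm_pos_iff.2 (bl_den_ne (ha j) (by simp))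
    nlinarith
  have hq : q.natDegree ≤ n := by
    refine (Polynomial.natDegree_prod_le _ _).trans ?_
    refine (Finset.sum_le_sum (g := fun _ => 1) fun j _ => ?_).trans (by simp)
    compute_degree
  have hq' : q'.natDegree ≤ n := by
    refine (Polynomial.natDegree_prod_le _ _).trans ?_
    refine (Finset.sum_le_sum (g := fun _ => 1) fun j _ => ?_).trans (by simp)
    compute_degree
  have hp : p.natDegree ≤ n := by
    refine (Polynomial.natDegree_sub_le _ _).trans (max_le ?_ ?_)
    · exact (Polynomial.natDegree_C_mul_le _ _).trans hq
    · exact (Polynomial.natDegree_C_mul_le _ _).trans hq'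
  refine le_trans ?_ (p.card_roots'.trans hp)
  have : s ⊆ p.roots.toFinset := by
    intro z hz
    rw [Multiset.mem_toFinset, Polynomial.mem_roots hp0, Polynomial.IsRoot.def, hpe]
    obtain ⟨hz1, hz2⟩ := hs z hz
    have hz1 := mem_unitDisc.1 hz1
    rw [← hz2, hφ z hz1]
    simp only [bl]
    rw [Finset.prod_div_distrib, mul_assoc, div_mul_cancel₀, sub_self]
    exact Finset.prod_ne_zero_iff.2 fun j _ => bl_den_ne (ha j) hz1.le
  exact (Finset.card_le_card this).trans (Multiset.toFinset_card_le _)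


lemma one_sub_prod_le {n : ℕ} (x : Fin n → ℝ) (h0 : ∀ j, 0 ≤ x j) (h1 : ∀ j, x j ≤ 1) :
    1 - ∏ j, x j ≤ ∑ j, (1 - x j) := by
  induction n with
  | zero => simp
  | succ n ih =>
    rw [Fin.prod_univ_succ, Fin.sum_univ_succ]
    have h2 := ih (fun j => x j.succ) (fun j => h0 _) (fun j => h1 _)
    have h3 : ∏ j : Fin n, x j.succ ≤ 1 := Finset.prod_le_one (fun _ _ => h0 _) fun i _ => h1 _
    nlinarith [h0 0, h1 0]

lemma blaschke_one_sub {n : ℕ} {a : Fin n → ℂ} (ha : ∀ j, ‖a j‖ < 1) {κ : ℂ} (hκ : ‖κ‖ = 1) :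
    ∃ M : ℝ, 1 ≤ M ∧ ∀ z : ℂ, ‖z‖ < 1 → 1 - ‖κ * ∏ j, bl (a j) z‖ ^ 2 ≤ M * (1 - ‖z‖ ^ 2) := by
  refine ⟨1 + ∑ j, 1 / (1 - ‖a j‖) ^ 2, ?_, fun z hz => ?_⟩
  · have : 0 ≤ ∑ j, 1 / (1 - ‖a j‖) ^ 2 := Finset.sum_nonneg fun _ _ => by positivity
    linarith
  · rw [norm_mul, hκ, one_mul, norm_prod, ← Finset.prod_pow]
    refine (one_sub_prod_le _ (fun j => by positivity) fun j => ?_).trans ?_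
    · have := bl_norm_le (ha j) hz.le
      nlinarith [norm_nonneg (bl (a j) z)]
    · rw [add_mul, Finset.sum_mul]
      have h1 : 0 ≤ 1 - ‖z‖ ^ 2 := by nlinarith [norm_nonneg z]
      have h2 := Finset.sum_le_sum fun (j : Fin n) (_ : j ∈ Finset.univ) => bl_one_sub (ha j) hz
      linarith

lemma bounded_of_wco {u φ : ℂ → ℂ} (hm : MapsTo φ unitDisc unitDisc) {M : ℝ} (hM1 : 1 ≤ M)
    (hM : ∀ z : ℂ, ‖z‖ < 1 → 1 - ‖φ z‖ ^ 2 ≤ M * (1 - ‖z‖ ^ 2)) (hu : WCOBounded u φ) :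
    ∃ K : ℝ, ∀ z : ℂ, ‖z‖ < 1 → ‖u z‖ ≤ K := by
  obtain ⟨C, hC0, hC⟩ := hu
  refine ⟨Real.sqrt (C * (1 + Real.log M)), fun z hz => Real.le_sqrt_of_sq_le ?_⟩
  have hw : ‖φ z‖ < 1 := mem_unitDisc.1 (hm (mem_unitDisc.2 hz))
  obtain ⟨f, hf, hfn, hfw⟩ := exists_kernel hw
  obtain ⟨h1, h2⟩ := hC f hf
  have h3 := pointwise_bound h1 hz
  have hk := one_le_kap hw
  have hkz := one_le_kap hz
  rw [hfw, norm_mul, Complex.norm_real, Real.norm_of_nonneg (by linarith), mul_pow] at h3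
  rw [hfn] at h2
  have hlogM := Real.log_nonneg hM1
  have hkk : kap z ≤ (1 + Real.log M) * kap (φ z) := by
    have e1 : 0 < 1 - ‖φ z‖ ^ 2 := by nlinarith [norm_nonneg (φ z)]
    have e2 : 0 < 1 - ‖z‖ ^ 2 := by nlinarith [norm_nonneg z]
    have := Real.log_le_log e1 (hM z hz)
    rw [Real.log_mul (by linarith) e2.ne'] at this
    have h5 : kap z ≤ Real.log M + kap (φ z) := by unfold kap; linarith
    nlinarith
  have h4 : ‖u z‖ ^ 2 * kap (φ z) ^ 2 ≤ (C * (1 + Real.log M)) * kap (φ z) ^ 2 := by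
    calc _ ≤ _ := h3
      _ ≤ C * kap (φ z) * ((1 + Real.log M) * kap (φ z)) := by
        apply mul_le_mul h2 hkk (by linarith)
        exact mul_nonneg hC0 (by linarith)
      _ = _ := by ring
  exact le_of_mul_le_mul_right h4 (by positivity)

lemma memDirichlet_iff_memLp {f : ℂ → ℂ} (hf : DifferentiableOn ℂ f unitDisc) :
    MemDirichlet f ↔ MemLp (deriv f) 2 (volume.restrict unitDisc) := by
  rw [MemDirichlet, and_iff_right hf, memLp_two_iff_integrable_sq_norm (aesm_deriv hf)]
  rfl

/-- decomposition for a general finite Blaschke product -/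
lemma decomposition' {n : ℕ} {a : Fin n → ℂ} (ha : ∀ j, ‖a j‖ < 1) (hn : 0 < n) {κ : ℂ} (hκ : ‖κ‖ = 1)
    {g : ℂ → ℂ} (hg : MemDirichlet g) :
    ∃ (e f : Fin n → ℂ → ℂ), (∀ j, ∃ M : ℝ, ∀ z, ‖z‖ < 1 → ‖e j z‖ ≤ M) ∧ (∀ j, MemDirichlet (f j)) ∧
      ∀ z, ‖z‖ < 1 → g z = ∑ j, e j z * f j (κ * ∏ j, bl (a j) z) := by
  let a0 := a ⟨0, hn⟩
  have ha0 : ‖a0‖ < 1 := ha _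
  choose l hl1 hl2 using fun j => bl_comp ha0 (ha j)
  have hmaps : MapsTo (bl a0) unitDisc unitDisc := fun z hz =>
    mem_unitDisc.2 (bl_norm_lt ha0 (mem_unitDisc.1 hz))
  have hgc : MemDirichlet (fun z => g (bl a0 z)) := by
    refine memDirichlet_comp (N := 1) (bl_diff ha0) hmaps (fun w s hs => ?_) hg
    refine Finset.card_le_one.2 fun x hx y hy => ?_
    rw [← bl_invol ha0 (mem_unitDisc.1 (hs x hx).1), ← bl_invol ha0 (mem_unitDisc.1 (hs y hy).1),
      (hs x hx).2, (hs y hy).2]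
  obtain ⟨e, f, h1, h2, h3⟩ := decomposition (a := fun j => bl a0 (a j)) (κ := κ * ∏ j, l j)
    (fun j => bl_norm_lt ha0 (ha j)) ⟨⟨0, hn⟩, bl_self a0⟩ (by rw [norm_mul, norm_prod]; simp [hκ, hl1]) hgc
  refine ⟨fun j z => e j (bl a0 z), f, fun j => ?_, h2, fun z hz => ?_⟩
  · obtain ⟨M, hM⟩ := h1 j
    exact ⟨M, fun z hz => hM _ (bl_norm_lt ha0 hz)⟩
  · have hz' := bl_norm_lt ha0 hz
    have h4 := h3 (bl a0 z) hz'
    simp only [bl_invol ha0 hz] at h4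
    rw [h4]
    refine Finset.sum_congr rfl fun j _ => ?_
    congr 2
    rw [mul_assoc, ← Finset.prod_mul_distrib]
    congr 1
    refine Finset.prod_congr rfl fun i _ => ?_
    rw [← hl2 i _ hz', bl_invol ha0 hz]

lemma memLp_bdd_mul {u F : ℂ → ℂ} {K : ℝ} (hu : DifferentiableOn ℂ u unitDisc) (hK : ∀ z, ‖z‖ < 1 → ‖u z‖ ≤ K)
    (hF : MemLp F 2 (volume.restrict unitDisc)) : MemLp (fun z => u z * F z) 2 (volume.restrict unitDisc) := by
  refine hF.of_le_mul (c := K) ?_ ?_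
  · exact (hu.continuousOn.aestronglyMeasurable isOpen_unitDisc.measurableSet).mul hF.1
  · refine (ae_restrict_iff' isOpen_unitDisc.measurableSet).2 (ae_of_all _ fun z hz => ?_)
    rw [norm_mul]
    exact mul_le_mul_of_nonneg_right (hK z (mem_unitDisc.1 hz)) (norm_nonneg _)

lemma deriv_mul_disc {u g : ℂ → ℂ} (hu : DifferentiableOn ℂ u unitDisc) (hg : DifferentiableOn ℂ g unitDisc)
    {z : ℂ} (hz : z ∈ unitDisc) : deriv (fun z => u z * g z) z = deriv u z * g z + u z * deriv g z :=
  deriv_fun_mul (hu.differentiableAt (isOpen_unitDisc.mem_nhds hz)) (hg.differentiableAt (isOpen_unitDisc.mem_nhds hz))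

lemma blaschke_imp {φ : ℂ → ℂ} (hφd : DifferentiableOn ℂ φ unitDisc) (hm : MapsTo φ unitDisc unitDisc)
    (hB : IsFiniteBlaschke φ) : multSpace φ = dirichletMultipliers := by
  obtain ⟨θ, n, a, ha, hφ⟩ := hB
  set κ := Complex.exp (θ * I) with hκd
  have hκ : ‖κ‖ = 1 := Complex.norm_exp_ofReal_mul_I θ
  have hφ' : ∀ z, ‖z‖ < 1 → φ z = κ * ∏ j, bl (a j) z := fun z hz => hφ z (mem_unitDisc.2 hz)
  have hn : 0 < n := by
    rcases Nat.eq_zero_or_pos n with rfl | h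
    · have h0 : ‖φ 0‖ < 1 := mem_unitDisc.1 (hm (mem_unitDisc.2 (by simp)))
      rw [hφ' 0 (by simp)] at h0
      simp [hκ] at h0
    · exact h
  have hN := fiber_count ha hκ hm hφ'
  obtain ⟨M, hM1, hM⟩ := blaschke_one_sub ha hκ
  have hM' : ∀ z : ℂ, ‖z‖ < 1 → 1 - ‖φ z‖ ^ 2 ≤ M * (1 - ‖z‖ ^ 2) := fun z hz => by
    rw [hφ' z hz]; exact hM z hz
  refine Set.Subset.antisymm ?_ ?_
  · rintro u ⟨huD, huW⟩
    refine ⟨huD.1, fun g hg => ?_⟩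
    obtain ⟨K, hK⟩ := bounded_of_wco hm hM1 hM' huW
    obtain ⟨C, hC0, hC⟩ := huW
    have hug : DifferentiableOn ℂ (fun z => u z * g z) unitDisc := huD.1.mul hg.1
    rw [memDirichlet_iff_memLp hug]
    obtain ⟨e, f, he, hf, hd⟩ := decomposition' ha hn hκ hg
    choose E hE using he
    have hmain : ∀ j, MemLp (fun z => deriv u z * f j (φ z)) 2 (volume.restrict unitDisc) := by
      intro j
      have hc := memDirichlet_comp hφd hm hN (hf j)
      have h1 := (memDirichlet_iff_memLp (hC _ (hf j)).1.1).1 (hC _ (hf j)).1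
      have h2 := memLp_bdd_mul huD.1 hK ((memDirichlet_iff_memLp hc.1).1 hc)
      refine (h1.sub h2).ae_eq ?_
      refine (ae_restrict_iff' isOpen_unitDisc.measurableSet).2 (ae_of_all _ fun z hz => ?_)
      simp only [Pi.sub_apply]
      rw [deriv_mul_disc huD.1 hc.1 hz]; ring
    have h3 : MemLp (fun z => deriv u z * g z) 2 (volume.restrict unitDisc) := by
      refine (memLp_finsetSum Finset.univ fun j _ => ((hmain j).norm.const_mul (E j))).mono' ?_ ?_
      · exact (aesm_deriv huD.1).mul (hg.1.continuousOn.aestronglyMeasurable isOpen_unitDisc.measurableSet)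
      · refine (ae_restrict_iff' isOpen_unitDisc.measurableSet).2 (ae_of_all _ fun z hz => ?_)
        have hz' := mem_unitDisc.1 hz
        rw [hd z hz', ← hφ' z hz', Finset.mul_sum]
        refine (norm_sum_le _ _).trans (Finset.sum_le_sum fun j _ => ?_)
        rw [show deriv u z * (e j z * f j (φ z)) = e j z * (deriv u z * f j (φ z)) by ring, norm_mul]
        exact mul_le_mul_of_nonneg_right (hE j z hz') (norm_nonneg _)
    have h4 := memLp_bdd_mul huD.1 hK ((memDirichlet_iff_memLp hg.1).1 hg)
    refine (h3.add h4).ae_eq ?_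
    refine (ae_restrict_iff' isOpen_unitDisc.measurableSet).2 (ae_of_all _ fun z hz => ?_)
    simp only [Pi.add_apply]
    rw [deriv_mul_disc huD.1 hg.1 hz]
  · intro u hu
    have h1 : MemDirichlet (fun _ => (1 : ℂ)) := ⟨differentiableOn_const _, by simp⟩
    obtain ⟨C, hC0, hC⟩ := multiplier_bounded hu
    obtain ⟨C', hC0', hC'⟩ := dirNormSq_comp hφd hm hN
    refine ⟨by simpa using hu.2 _ h1, C * C', by positivity, fun f hf => ?_⟩
    have hc := memDirichlet_comp hφd hm hN hf
    refine ⟨hu.2 _ hc, (hC _ hc).trans ?_⟩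
    rw [mul_assoc]
    exact mul_le_mul_of_nonneg_left (hC' f hf) hC0

lemma inner_coeff {φ : ℂ → ℂ} (hφ : IsInner φ) {y : L2} (hy : ∀ n, y n = taylorCoeff φ n) (k : ℕ) :
    inner ℂ y ((bS ^ k) y) = if k = 0 then (1 : ℂ) else 0 := by
  obtain ⟨hd, hm, hr⟩ := hφ
  have hev : ∀ᶠ r : ℝ in nhdsWithin 1 (Iio 1), 0 ≤ r ∧ r < 1 := by
    have h1 : ∀ᶠ r : ℝ in nhdsWithin 1 (Iio 1), r < 1 := self_mem_nhdsWithin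
    have h2 : ∀ᶠ r : ℝ in nhdsWithin 1 (Iio 1), 0 < r := nhdsWithin_le_nhds (lt_mem_nhds zero_lt_one)
    filter_upwards [h1, h2] with r a b using ⟨b.le, a⟩
  have hdisc : ∀ r : ℝ, 0 ≤ r → r < 1 → ∀ θ : ℝ, (r : ℂ) * Complex.exp (θ * I) ∈ unitDisc := by
    intro r h0 h1 θ
    rw [mem_unitDisc, norm_mul, Complex.norm_exp_ofReal_mul_I, mul_one, Complex.norm_real, Real.norm_of_nonneg h0]
    exact h1
  have hexp : ∀ θ : ℝ, ‖Complex.exp (-k * (θ * I))‖ = 1 := fun θ => by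
    rw [show -(k : ℂ) * (θ * I) = ((-k * θ : ℝ) : ℂ) * I by push_cast; ring, Complex.norm_exp_ofReal_mul_I]
  -- integral side
  have hI : Tendsto (fun r : ℝ => ∫ θ in (0 : ℝ)..(0 + 2 * Real.pi),
      ((‖φ (r * Complex.exp (θ * I))‖ ^ 2 : ℝ) : ℂ) * Complex.exp (-k * (θ * I))) (nhdsWithin 1 (Iio 1))
      (nhds (∫ θ in (0 : ℝ)..(0 + 2 * Real.pi), Complex.exp (-k * (θ * I)))) := by
    refine intervalIntegral.tendsto_integral_filter_of_dominated_convergence (fun _ => 1) ?_ ?_ ?_ ?_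
    · filter_upwards [hev] with r hr
      apply Continuous.aestronglyMeasurable
      have : Continuous fun θ : ℝ => φ (r * Complex.exp (θ * I)) :=
        hd.continuousOn.comp_continuous (by fun_prop) (hdisc r hr.1 hr.2)
      exact (Complex.continuous_ofReal.comp (this.norm.pow 2)).mul (by fun_prop)
    · filter_upwards [hev] with r hr
      refine ae_of_all _ fun θ _ => ?_
      rw [norm_mul, hexp, mul_one, Complex.norm_real, Real.norm_of_nonneg (by positivity)]
      have := mem_unitDisc.1 (hm (hdisc r hr.1 hr.2 θ))
      nlinarith [norm_nonneg (φ (r * Complex.exp (θ * I)))]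
    · exact intervalIntegrable_const
    · have hr' := (ae_restrict_iff' measurableSet_Ioc).1 hr
      filter_upwards [hr'] with θ hθ hθ'
      rw [zero_add, uIoc_of_le (by positivity)] at hθ'
      have h1 := ((hθ hθ').pow 2).ofReal.mul_const (Complex.exp (-k * (θ * I)))
      simpa using h1
  have hS : Tendsto (fun r : ℝ => ∑' n, 2 * (Real.pi : ℂ) * (taylorCoeff φ (n + k) * (starRingEnd ℂ) (taylorCoeff φ n)) * r ^ (2 * n + k))
      (nhdsWithin 1 (Iio 1)) (nhds (∑' n, 2 * (Real.pi : ℂ) * (taylorCoeff φ (n + k) * (starRingEnd ℂ) (taylorCoeff φ n)))) := by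
    refine tendsto_tsum_of_dominated_convergence
      (bound := fun n => 2 * Real.pi * (‖(bS ^ k) y n‖ ^ 2 + ‖y n‖ ^ 2)) ?_ ?_ ?_
    · exact ((L2_hasSum ((bS ^ k) y)).add (L2_hasSum y)).summable.mul_left _
    · intro n
      have h1 : Tendsto (fun r : ℝ => (r : ℂ)) (nhdsWithin 1 (Iio 1)) (nhds ((1 : ℝ) : ℂ)) :=
        (Complex.continuous_ofReal.tendsto 1).mono_left nhdsWithin_le_nhds
      have h2 := (h1.pow (2 * n + k)).const_mul (2 * (Real.pi : ℂ) * (taylorCoeff φ (n + k) * (starRingEnd ℂ) (taylorCoeff φ n)))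
      simpa using h2
    · filter_upwards [hev] with r hr n
      rw [bS_pow_apply, hy, hy]
      simp only [norm_mul, norm_pow, RCLike.norm_conj, Complex.norm_real, Complex.norm_ofNat]
      rw [Real.norm_of_nonneg Real.pi_pos.le, Real.norm_of_nonneg hr.1]
      have h1 : r ^ (2 * n + k) ≤ 1 := pow_le_one₀ hr.1 hr.2.le
      have h2 : ‖taylorCoeff φ (n + k)‖ * ‖taylorCoeff φ n‖ ≤ ‖taylorCoeff φ (n + k)‖ ^ 2 + ‖taylorCoeff φ n‖ ^ 2 := by
        nlinarith [sq_nonneg (‖taylorCoeff φ (n + k)‖ - ‖taylorCoeff φ n‖), sq_nonneg ‖taylorCoeff φ (n + k)‖, sq_nonneg ‖taylorCoeff φ n‖]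
      have h3 : 0 ≤ 2 * Real.pi * (‖taylorCoeff φ (n + k)‖ * ‖taylorCoeff φ n‖) := by positivity
      calc _ ≤ 2 * Real.pi * (‖taylorCoeff φ (n + k)‖ * ‖taylorCoeff φ n‖) * 1 := mul_le_mul_of_nonneg_left h1 h3
        _ ≤ _ := by rw [mul_one]; exact mul_le_mul_of_nonneg_left h2 (by positivity)
  have heq : (∑' n, 2 * (Real.pi : ℂ) * (taylorCoeff φ (n + k) * (starRingEnd ℂ) (taylorCoeff φ n))) =
      ∫ θ in (0 : ℝ)..(0 + 2 * Real.pi), Complex.exp (-k * (θ * I)) := by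
    refine tendsto_nhds_unique hS (hI.congr' ?_)
    filter_upwards [hev] with r hr
    exact (circle_coeff hd hr.1 hr.2 0 k).tsum_eq.symm
  have hintg : ∫ θ in (0 : ℝ)..(0 + 2 * Real.pi), Complex.exp (-k * (θ * I)) = 2 * (Real.pi : ℂ) * if k = 0 then (1 : ℂ) else 0 := by
    split_ifs with h
    · simp [h]
    · have hc : -(k : ℂ) * I ≠ 0 := mul_ne_zero (neg_ne_zero.2 (Nat.cast_ne_zero.2 h)) I_ne_zero
      have e : ∀ θ : ℝ, Complex.exp (-k * (θ * I)) = Complex.exp (-(k : ℂ) * I * θ) := fun θ => by congr 1; ring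
      simp only [e]
      rw [integral_exp_mul_complex hc]
      have : Complex.exp (-(k : ℂ) * I * ((0 + 2 * Real.pi : ℝ) : ℂ)) = 1 := by
        rw [Complex.exp_eq_one_iff]; exact ⟨-k, by push_cast; ring⟩
      rw [this]; simp
  rw [hintg, tsum_mul_left] at heq
  have hpi : 2 * (Real.pi : ℂ) ≠ 0 := by simp [Real.pi_ne_zero]
  rw [← mul_left_cancel₀ hpi heq, lp.inner_eq_tsum]
  refine tsum_congr fun n => ?_
  rw [RCLike.inner_apply, bS_pow_apply, hy, hy]

lemma resolvent_zero {z : ℂ} (hz : ‖z‖ < 1) {R : L2 →L[ℂ] L2} (hR : ∀ y, R y - z • bS (R y) = y) (x : L2) :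
    R x 0 = ev z x := by
  have h1 : ∀ m, R x m = x m + z * R x (m + 1) := by
    intro m
    have := congrArg (fun v : L2 => v m) (hR x)
    simp only [lp.coeFn_sub, lp.coeFn_smul, Pi.sub_apply, Pi.smul_apply, bS_apply, smul_eq_mul] at this
    rw [← this]; ring
  have h2 : ∀ N, R x 0 = ∑ j ∈ Finset.range N, x j * z ^ j + z ^ N * R x N := by
    intro N
    induction N with
    | zero => simp
    | succ N ih => rw [ih, Finset.sum_range_succ, h1 N]; ring
  have h3 : Tendsto (fun N => z ^ N * R x N) atTop (nhds 0) := by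
    refine squeeze_zero_norm (a := fun N => ‖z‖ ^ N * ‖R x‖) (fun N => ?_) ?_
    · rw [norm_mul, norm_pow]
      have := lp.norm_apply_le_norm (p := 2) (by norm_num) (R x) N
      gcongr
    · have := (tendsto_pow_atTop_nhds_zero_of_lt_one (norm_nonneg z) hz).mul_const ‖R x‖
      rwa [zero_mul] at this
  have h4 := (ev_hasSum hz x).tendsto_sum_nat.add h3
  rw [add_zero] at h4
  exact tendsto_nhds_unique (tendsto_const_nhds.congr h2) h4

lemma bS_pow_contr (N : ℕ) (V : L2) : ‖(bS ^ N) V‖ ≤ ‖V‖ := by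
  induction N with
  | zero => simp
  | succ N ih =>
    rw [pow_succ' bS N, mul_apply_eq_comp]
    refine le_trans ?_ ih
    have := bS_norm_sq ((bS ^ N) V)
    exact abs_le_of_sq_le_sq' (by nlinarith [sq_nonneg ‖(bS ^ N) V 0‖]) (norm_nonneg _) |>.2

lemma inner_identity {φ : ℂ → ℂ} (hφ : IsInner φ) {y : L2} (hy : ∀ n, y n = taylorCoeff φ n)
    {z : ℂ} (hz : ‖z‖ < 1) :
    HasSum (fun m => (1 - ‖z‖ ^ 2) * ‖ev z ((bS ^ (m + 1)) y)‖ ^ 2) (1 - ‖ev z y‖ ^ 2) := by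
  obtain ⟨R, hRc, hR⟩ := exists_resolvent hz
  set V := R y with hV
  have hVm : ∀ m, (bS ^ m) V 0 = ev z ((bS ^ m) y) := by
    intro m
    rw [← resolvent_zero hz hR, hV]
    have := congrArg (fun T : L2 →L[ℂ] L2 => T y) (hRc.pow_right m).eq
    simp only [mul_apply_eq_comp] at this
    rw [this]
  have hyy : ‖y‖ ^ 2 = 1 := by
    have := inner_coeff hφ hy 0
    rw [pow_zero, one_apply_eq_self, inner_self_eq_norm_sq_to_K] at this
    have h' : ((‖y‖ ^ 2 : ℝ) : ℂ) = 1 := by simpa using this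
    exact_mod_cast h'
  have hit : ∀ N, inner ℂ y V = 1 + z ^ (N + 1) * inner ℂ y ((bS ^ (N + 1)) V) := by
    have hV' : V = y + z • bS V := sub_eq_iff_eq_add.1 (hR y)
    have hstep : ∀ N, (bS ^ N) V = (bS ^ N) y + z • (bS ^ (N + 1)) V := by
      intro N
      conv_lhs => rw [hV']
      rw [map_add, map_smul, pow_succ bS N, mul_apply_eq_comp]
    intro N
    induction N with
    | zero =>
      have := hstep 0
      rw [pow_zero, one_apply_eq_self, one_apply_eq_self] at this
      conv_lhs => rw [this]
      rw [inner_add_right, inner_smul_right]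
      have h0 := inner_coeff hφ hy 0
      rw [pow_zero, one_apply_eq_self, if_pos rfl] at h0
      rw [h0]; simp
    | succ N ih =>
      rw [ih, hstep (N + 1), inner_add_right, inner_smul_right, inner_coeff hφ hy, if_neg (by omega)]
      ring
  have hin : inner ℂ y V = 1 := by
    have h3 : Tendsto (fun N => z ^ (N + 1) * inner ℂ y ((bS ^ (N + 1)) V)) atTop (nhds 0) := by
      refine squeeze_zero_norm (a := fun N => ‖z‖ ^ (N + 1) * (‖y‖ * ‖V‖)) (fun N => ?_) ?_
      · rw [norm_mul, norm_pow]
        have h1 := norm_inner_le_norm (𝕜 := ℂ) y ((bS ^ (N + 1)) V)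
        have h2 := bS_pow_contr (N + 1) V
        gcongr
        exact h1.trans (by gcongr)
      · have := ((tendsto_pow_atTop_nhds_zero_of_lt_one (norm_nonneg z) hz).comp (tendsto_add_atTop_nat 1)).mul_const (‖y‖ * ‖V‖)
        rwa [zero_mul] at this
    have h4 := h3.const_add 1
    rw [add_zero] at h4
    exact tendsto_nhds_unique (tendsto_const_nhds.congr hit) h4
  have e1 : ‖z‖ ^ 2 * ‖bS V‖ ^ 2 = ‖V‖ ^ 2 - 1 := by
    have : z • bS V = V - y := eq_sub_of_add_eq (sub_eq_iff_eq_add'.1 (hR y)).symm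
    rw [← mul_pow, ← norm_smul, this, norm_sub_rev, norm_sub_sq (𝕜 := ℂ), hin, hyy]
    simp; ring
  have e2 := bS_norm_sq V
  have e3 := hVm 0
  simp only [pow_zero, one_apply_eq_self] at e3
  have h5 := (L2_hasSum (bS V)).mul_left (1 - ‖z‖ ^ 2)
  have e4 : (1 - ‖z‖ ^ 2) * ‖bS V‖ ^ 2 = 1 - ‖ev z y‖ ^ 2 := by
    rw [← e3]; linarith
  rw [e4] at h5
  have e5 : (fun m => (1 - ‖z‖ ^ 2) * ‖ev z ((bS ^ (m + 1)) y)‖ ^ 2) = fun m => (1 - ‖z‖ ^ 2) * ‖bS V m‖ ^ 2 := by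
    ext m
    rw [← hVm (m + 1), bS_pow_apply, bS_apply, zero_add]
  rw [e5]; exact h5


/-- approach to the unit circle from inside -/
def lB : Filter ℂ := comap norm (nhdsWithin (1 : ℝ) (Iio 1))

lemma lB_norm : Tendsto (fun z : ℂ => ‖z‖) lB (nhds 1) :=
  tendsto_comap.mono_right nhdsWithin_le_nhds

lemma lB_lt : ∀ᶠ z in lB, ‖z‖ < 1 :=
  tendsto_comap.eventually (self_mem_nhdsWithin : Iio (1 : ℝ) ∈ nhdsWithin 1 (Iio 1))

lemma lB_ev {P : ℂ → Prop} (h : ∀ᶠ z in lB, P z) : ∃ ρ : ℝ, 0 ≤ ρ ∧ ρ < 1 ∧ ∀ z : ℂ, ρ < ‖z‖ → ‖z‖ < 1 → P z := by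
  obtain ⟨t, ht, hs⟩ := mem_comap.1 h
  obtain ⟨l, hl, hl2⟩ := mem_nhdsLT_iff_exists_Ioo_subset.1 ht
  refine ⟨max l 0, le_max_right _ _, max_lt hl zero_lt_one, fun z h1 h2 => hs ?_⟩
  exact hl2 ⟨(le_max_left _ _).trans_lt h1, h2⟩

lemma lB_one_sub : Tendsto (fun z : ℂ => 1 - ‖z‖ ^ 2) lB (nhds 0) := by
  have := (lB_norm.pow 2).const_sub 1
  simpa using this

lemma term_tendsto (x : L2) (hx : Tendsto (fun N => ‖(bS ^ N) x‖ ^ 2) atTop (nhds 0)) :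
    Tendsto (fun z => (1 - ‖z‖ ^ 2) * ‖ev z x‖ ^ 2) lB (nhds 0) := by
  have hexp : ∀ z : ℂ, ‖z‖ < 1 → ∀ N, ev z x = ∑ j ∈ Finset.range N, x j * z ^ j + z ^ N * ev z ((bS ^ N) x) := by
    intro z hz N
    induction N with
    | zero => simp
    | succ N ih =>
      rw [ih, Finset.sum_range_succ, ev_bS hz ((bS ^ N) x), pow_succ' bS N, mul_apply_eq_comp, bS_pow_apply, zero_add]
      ring
  rw [Metric.tendsto_nhds]
  intro ε hε
  obtain ⟨N, hN⟩ := (hx.eventually (gt_mem_nhds (show (0 : ℝ) < ε / 4 by linarith))).exists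
  set K := ∑ j ∈ Finset.range N, ‖x j‖ with hK
  have h1 : Tendsto (fun z : ℂ => 2 * K ^ 2 * (1 - ‖z‖ ^ 2)) lB (nhds 0) := by
    simpa using lB_one_sub.const_mul (2 * K ^ 2)
  filter_upwards [lB_lt, h1.eventually (gt_mem_nhds (show (0 : ℝ) < ε / 2 by linarith))] with z hz hz2
  have hz1 : 0 < 1 - ‖z‖ ^ 2 := by nlinarith [norm_nonneg z]
  rw [Real.dist_eq, sub_zero, abs_of_nonneg (by positivity)]
  have hb : ‖ev z x‖ ≤ K + ‖ev z ((bS ^ N) x)‖ := by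
    rw [hexp z hz N]
    refine (norm_add_le _ _).trans (add_le_add ?_ ?_)
    · refine (norm_sum_le _ _).trans (Finset.sum_le_sum fun j _ => ?_)
      rw [norm_mul, norm_pow]
      exact mul_le_of_le_one_right (norm_nonneg _) (pow_le_one₀ (norm_nonneg _) hz.le)
    · rw [norm_mul, norm_pow]
      exact mul_le_of_le_one_left (norm_nonneg _) (pow_le_one₀ (norm_nonneg _) hz.le)
  have he := ev_bound hz ((bS ^ N) x)
  rw [← div_eq_mul_inv, le_div_iff₀ hz1] at he
  have hK0 : 0 ≤ K := Finset.sum_nonneg fun _ _ => norm_nonneg _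
  have h2 : ‖ev z x‖ ^ 2 ≤ 2 * K ^ 2 + 2 * ‖ev z ((bS ^ N) x)‖ ^ 2 := by
    calc ‖ev z x‖ ^ 2 ≤ (K + ‖ev z ((bS ^ N) x)‖) ^ 2 := by gcongr
      _ ≤ _ := by nlinarith [sq_nonneg (K - ‖ev z ((bS ^ N) x)‖)]
  nlinarith [mul_le_mul_of_nonneg_left h2 hz1.le]

lemma inner_boundary {φ : ℂ → ℂ} (hφ : IsInner φ) (hD : MemDirichlet φ) :
    Tendsto (fun z => ‖φ z‖) lB (nhds 1) := by
  obtain ⟨y, hy, hyQ, hyg⟩ := hardy_seq hD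
  have hsum : Summable fun m : ℕ => ‖(bS ^ (m + 1)) y‖ ^ 2 :=
    summable_of_sum_range_le (fun _ => by positivity) (sum_bS_pow_le hyQ)
  have hz0 := hsum.tendsto_atTop_zero
  have hterm : ∀ m : ℕ, Tendsto (fun z => (1 - ‖z‖ ^ 2) * ‖ev z ((bS ^ (m + 1)) y)‖ ^ 2) lB (nhds 0) := by
    intro m
    refine term_tendsto _ ?_
    have := hz0.comp (tendsto_add_atTop_nat m)
    refine this.congr fun N => ?_
    simp only [Function.comp]
    rw [← mul_apply_eq_comp, ← pow_add, add_assoc]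
  have h1 : Tendsto (fun z => ∑' m : ℕ, (1 - ‖z‖ ^ 2) * ‖ev z ((bS ^ (m + 1)) y)‖ ^ 2) lB (nhds (∑' _ : ℕ, 0)) := by
    refine tendsto_tsum_of_dominated_convergence hsum hterm ?_
    filter_upwards [lB_lt] with z hz m
    have hz1 : 0 < 1 - ‖z‖ ^ 2 := by nlinarith [norm_nonneg z]
    rw [Real.norm_of_nonneg (by positivity)]
    have := ev_bound hz ((bS ^ (m + 1)) y)
    rw [← div_eq_mul_inv, le_div_iff₀ hz1] at this
    linarith
  rw [tsum_zero] at h1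
  have h2 : Tendsto (fun z => 1 - ‖φ z‖ ^ 2) lB (nhds 0) := by
    refine h1.congr' ?_
    filter_upwards [lB_lt] with z hz
    rw [(inner_identity hφ hy hz).tsum_eq, hyg z hz]
  have h3 := (h2.const_sub 1).sqrt
  simpa using h3

lemma max_principle {h : ℂ → ℂ} (hd : DifferentiableOn ℂ h unitDisc)
    (hb : Tendsto (fun z => ‖h z‖) lB (nhds 1)) {z : ℂ} (hz : ‖z‖ < 1) : ‖h z‖ ≤ 1 := by
  refine le_of_forall_pos_le_add fun ε hε => ?_
  obtain ⟨ρ, h0, h1, h2⟩ := lB_ev (hb.eventually (gt_mem_nhds (show (1 : ℝ) < 1 + ε by linarith)))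
  obtain ⟨r, hr1, hr2⟩ := exists_between (max_lt h1 hz)
  have hr0 : 0 < r := h0.trans_lt ((le_max_left _ _).trans_lt hr1)
  have hcl : closure (ball (0 : ℂ) r) ⊆ unitDisc := by
    rw [closure_ball _ hr0.ne']
    intro w hw
    rw [mem_closedBall_zero_iff] at hw
    exact mem_unitDisc.2 (hw.trans_lt hr2)
  refine Complex.norm_le_of_forall_mem_frontier_norm_le isBounded_ball
    (hd.mono hcl).diffContOnCl (fun w hw => ?_) (subset_closure ?_)
  · rw [frontier_ball _ hr0.ne', mem_sphere_zero_iff_norm] at hw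
    exact (h2 w (by rw [hw]; exact (le_max_left _ _).trans_lt hr1) (by rw [hw]; exact hr2)).le
  · rw [mem_ball_zero_iff]; exact (le_max_right _ _).trans_lt hr1

lemma const_of_nonvanishing {h : ℂ → ℂ} (hd : DifferentiableOn ℂ h unitDisc)
    (hb : Tendsto (fun z => ‖h z‖) lB (nhds 1)) (hne : ∀ z, ‖z‖ < 1 → h z ≠ 0) :
    ∃ θ : ℝ, ∀ z, ‖z‖ < 1 → h z = Complex.exp (θ * I) := by
  have hle : ∀ z, ‖z‖ < 1 → ‖h z‖ ≤ 1 := fun z hz => max_principle hd hb hz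
  have hge : ∀ z, ‖z‖ < 1 → 1 ≤ ‖h z‖ := by
    intro z hz
    have h1 : DifferentiableOn ℂ (fun z => (h z)⁻¹) unitDisc := hd.fun_inv fun z hz => hne z (mem_unitDisc.1 hz)
    have h2 : Tendsto (fun z => ‖(h z)⁻¹‖) lB (nhds 1) := by
      have := hb.inv₀ one_ne_zero
      simpa using this
    have h3 := max_principle h1 h2 hz
    rw [norm_inv] at h3
    exact (inv_le_one₀ (norm_pos_iff.2 (hne z hz))).1 h3
  have h0 : ‖h 0‖ = 1 := le_antisymm (hle 0 (by simp)) (hge 0 (by simp))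
  have hc := Complex.eqOn_of_isPreconnected_of_isMaxOn_norm (f := h) (U := unitDisc) (c := 0)
    (convex_ball _ _).isPreconnected isOpen_unitDisc hd (mem_unitDisc.2 (by simp)) (by
      intro z hz
      simp only [mem_ofPred_eq, Function.comp, h0]
      exact hle z (mem_unitDisc.1 hz))
  refine ⟨Complex.arg (h 0), fun z hz => ?_⟩
  rw [hc (mem_unitDisc.2 hz)]
  have := Complex.norm_mul_exp_arg_mul_I (h 0)
  rw [h0, Complex.ofReal_one, one_mul] at this
  exact this.symm

lemma bl_boundary {b : ℂ} (hb : ‖b‖ < 1) : Tendsto (fun z => ‖bl b z‖) lB (nhds 1) := by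
  have h1 : Tendsto (fun z => 1 - ‖bl b z‖ ^ 2) lB (nhds 0) := by
    have h := lB_one_sub.const_mul (1 / (1 - ‖b‖) ^ 2)
    rw [mul_zero] at h
    refine tendsto_of_tendsto_of_tendsto_of_le_of_le' tendsto_const_nhds h ?_ ?_
    · filter_upwards [lB_lt] with z hz
      have := bl_norm_lt hb hz
      nlinarith [norm_nonneg (bl b z)]
    · filter_upwards [lB_lt] with z hz using bl_one_sub hb hz
  have h3 := (h1.const_sub 1).sqrt
  simpa using h3

lemma divide_zero {h : ℂ → ℂ} (hd : DifferentiableOn ℂ h unitDisc)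
    (hb : Tendsto (fun z => ‖h z‖) lB (nhds 1)) {b : ℂ} (hb1 : ‖b‖ < 1) (hb0 : h b = 0) :
    ∃ g : ℂ → ℂ, DifferentiableOn ℂ g unitDisc ∧ Tendsto (fun z => ‖g z‖) lB (nhds 1) ∧
      ∀ z, ‖z‖ < 1 → h z = bl b z * g z := by
  have heq : ∀ z, ‖z‖ < 1 → h z = bl b z * (-(1 - (starRingEnd ℂ) b * z) * dslope h b z) := by
    intro z hz
    have h1 := sub_smul_dslope h b z
    rw [hb0, sub_zero, smul_eq_mul] at h1
    have h2 := bl_den_ne hb1 hz.le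
    have h3 : bl b z * (1 - (starRingEnd ℂ) b * z) = b - z := by
      unfold bl; rw [div_mul_cancel₀ _ h2]
    rw [← h1]
    linear_combination (dslope h b z) * h3
  refine ⟨fun z => -(1 - (starRingEnd ℂ) b * z) * dslope h b z, ?_, ?_, heq⟩
  · refine DifferentiableOn.mul (by fun_prop) ?_
    exact (Complex.differentiableOn_dslope (isOpen_unitDisc.mem_nhds (mem_unitDisc.2 hb1))).2 hd
  · have h1 := hb.div (bl_boundary hb1) one_ne_zero
    rw [div_one] at h1
    refine h1.congr' ?_
    filter_upwards [lB_lt, (bl_boundary hb1).eventually (lt_mem_nhds zero_lt_one)] with z hz hz2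
    simp only [Pi.div_apply]
    rw [div_eq_iff hz2.ne', heq z hz, norm_mul, mul_comm]

lemma blaschke_of_boundary {φ : ℂ → ℂ} (hd : DifferentiableOn ℂ φ unitDisc)
    (hb : Tendsto (fun z => ‖φ z‖) lB (nhds 1)) : IsFiniteBlaschke φ := by
  by_contra hcon
  obtain ⟨ρ, hρ0, hρ1, hρ⟩ := lB_ev (hb.eventually (lt_mem_nhds zero_lt_one))
  have hzero : ∀ b, ‖b‖ < 1 → φ b = 0 → ‖b‖ ≤ ρ := by
    intro b h1 h2
    by_contra h3
    have := hρ b (not_le.1 h3) h1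
    simp [h2] at this
  have key : ∀ n : ℕ, ∃ (a : Fin n → ℂ) (h : ℂ → ℂ), (∀ j, ‖a j‖ ≤ ρ) ∧ DifferentiableOn ℂ h unitDisc ∧
      Tendsto (fun z => ‖h z‖) lB (nhds 1) ∧ ∀ z, ‖z‖ < 1 → φ z = h z * ∏ j, bl (a j) z := by
    intro n
    induction n with
    | zero => exact ⟨fun j => j.elim0, φ, fun j => j.elim0, hd, hb, fun z _ => by simp⟩
    | succ n ih =>
      obtain ⟨a, h, ha, hhd, hhb, hφ⟩ := ih
      by_cases hne : ∀ z, ‖z‖ < 1 → h z ≠ 0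
      · exfalso
        obtain ⟨θ, hθ⟩ := const_of_nonvanishing hhd hhb hne
        refine hcon ⟨θ, n, a, fun j => (ha j).trans_lt hρ1, fun z hz => ?_⟩
        have hz' := mem_unitDisc.1 hz
        rw [hφ z hz', hθ z hz']
        rfl
      · push Not at hne
        obtain ⟨b, hb1, hb0⟩ := hne
        obtain ⟨g, hgd, hgb, hg⟩ := divide_zero hhd hhb hb1 hb0
        refine ⟨Fin.cons b a, g, fun j => ?_, hgd, hgb, fun z hz => ?_⟩
        · refine Fin.cases ?_ (fun j => ?_) j
          · exact hzero b hb1 (by rw [hφ b hb1, hb0, zero_mul])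
          · exact ha j
        · rw [hφ z hz, hg z hz, Fin.prod_univ_succ]
          simp only [Fin.cons_zero, Fin.cons_succ]
          ring
  obtain ⟨t, ht1, ht2⟩ := exists_between hρ1
  have ht0 : 0 ≤ t := hρ0.trans ht1.le
  set z0 : ℂ := (t : ℂ)
  have hz0n : ‖z0‖ = t := by simp [z0, abs_of_nonneg ht0]
  have hz0 : ‖z0‖ < 1 := by rw [hz0n]; exact ht2
  have hpos : 0 < ‖φ z0‖ := hρ z0 (by rw [hz0n]; exact ht1) hz0
  set δ := (1 - ρ ^ 2) * (1 - t ^ 2) / 4 with hδ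
  have hρ2 : 0 < 1 - ρ ^ 2 := by nlinarith
  have ht3 : 0 < 1 - t ^ 2 := by nlinarith
  have hδ0 : 0 < δ := by positivity
  have hδ1 : δ ≤ 1 := by
    have : (1 - ρ ^ 2) * (1 - t ^ 2) ≤ 1 * 1 := by
      apply mul_le_mul <;> nlinarith [sq_nonneg ρ, sq_nonneg t]
    rw [hδ]; linarith
  have hbl : ∀ b, ‖b‖ ≤ ρ → ‖bl b z0‖ ^ 2 ≤ 1 - δ := by
    intro b hb
    have hb1 := hb.trans_lt hρ1
    have h1 := bl_identity hb1 hz0.le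
    have h2 := bl_norm_lt hb1 hz0
    have h3 : ‖1 - (starRingEnd ℂ) b * z0‖ ≤ 2 := by
      refine (norm_sub_le _ _).trans ?_
      rw [norm_one, norm_mul, RCLike.norm_conj]
      nlinarith [norm_nonneg b, norm_nonneg z0]
    have h4 : ‖1 - (starRingEnd ℂ) b * z0‖ ^ 2 ≤ 4 := by nlinarith [norm_nonneg (1 - (starRingEnd ℂ) b * z0)]
    have h5 : 0 ≤ 1 - ‖bl b z0‖ ^ 2 := by nlinarith [norm_nonneg (bl b z0)]
    have h6 : (1 - ρ ^ 2) * (1 - t ^ 2) ≤ (1 - ‖b‖ ^ 2) * (1 - ‖z0‖ ^ 2) := by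
      rw [hz0n]
      apply mul_le_mul_of_nonneg_right _ ht3.le
      nlinarith [norm_nonneg b]
    have h7 := mul_le_mul_of_nonneg_left h4 h5
    rw [hδ]; linarith
  have hbd : ∀ n : ℕ, ‖φ z0‖ ^ 2 ≤ (1 - δ) ^ n := by
    intro n
    obtain ⟨a, h, ha, hhd, hhb, hφ⟩ := key n
    have h1 := max_principle hhd hhb hz0
    rw [hφ z0 hz0, norm_mul, mul_pow, norm_prod, ← Finset.prod_pow]
    have h2 : ∏ j, ‖bl (a j) z0‖ ^ 2 ≤ (1 - δ) ^ n := by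
      refine (Finset.prod_le_prod (fun _ _ => by positivity) fun j _ => hbl (a j) (ha j)).trans ?_
      simp
    have h3 : ‖h z0‖ ^ 2 ≤ 1 := pow_le_one₀ (norm_nonneg _) h1
    have h4 : 0 ≤ ∏ j, ‖bl (a j) z0‖ ^ 2 := Finset.prod_nonneg fun _ _ => by positivity
    exact (mul_le_of_le_one_left h4 h3).trans h2
  have hlim := tendsto_pow_atTop_nhds_zero_of_lt_one (r := 1 - δ) (by linarith) (by linarith)
  have := ge_of_tendsto' hlim hbd
  have h9 : 0 < ‖φ z0‖ ^ 2 := by positivity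
  linarith

/-- For an inner function `φ`, `ℳ(φ) = ℳ(𝒟)` if and only if `φ` is a finite
Blaschke product. -/
theorem multSpace_eq_multipliers_iff_finiteBlaschke (φ : ℂ → ℂ)
    (hφ : IsInner φ) :
    multSpace φ = dirichletMultipliers ↔ IsFiniteBlaschke φ := by
  refine ⟨fun h => ?_, blaschke_imp hφ.1 hφ.2.1⟩
  have h1 : (fun _ => (1 : ℂ)) ∈ dirichletMultipliers :=
    ⟨differentiableOn_const _, fun f hf => by simpa using hf⟩
  rw [← h] at h1
  obtain ⟨_, C, _, hC⟩ := h1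
  have hid : MemDirichlet (fun z => z) := by
    refine ⟨differentiableOn_id, ?_⟩
    simp only [deriv_id'', norm_one, one_pow]
    exact integrableOn_const (by rw [unitDisc]; exact measure_ball_lt_top.ne) (by simp)
  have hD := (hC _ hid).1
  simp only [one_mul] at hD
  exact blaschke_of_boundary hφ.1 (inner_boundary hφ hD)
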